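/- arXiv:0910.1737 — 9 statements merged into one kernel-verified Lean document; each statement's English description precedes it below -/
import Mathlib

section
/- Let {p_n}_{n∈ℕ} be a sequence of real polynomials with deg p_n = n, and let c^{n+N−1}_j ∈ ℝ be given for n ≥ 0 and max(0, n−N) ≤ j ≤ n+N, with c^{n+N−1}_{n−N} ≠ 0 whenever n ≥ N. Set B_m(x) = (p_{mN}(x), p_{mN+1}(x), …, p_{(m+1)N−1}(x))ᵀ and let V_m be the unique N×N real matrix polynomial of degree m with B_m(x) = V_m(h(x))·P_0(x). For m ∈ ℕ define N×N matrices A_m, 𝔅_m, C_m by: (A_m)_{ij} = c^{(m+1)N−1+i}_{(m+1)N+j} for 0 ≤ j ≤ i ≤ N−1 and (A_m)_{ij} = 0 for j > i (lower triangular); (𝔅_m)_{ij} = c^{(m+1)N−1+i}_{mN+j} for 0 ≤ i,j ≤ N−1; (C_m)_{ij} = c^{(m+1)N−1+i}_{(m−1)N+j} for 0 ≤ i ≤ j ≤ N−1 and (C_m)_{ij} = 0 for j < i (upper triangular, nonsingular because its diagonal entries equal c^{(mN+i)+N−1}_{(mN+i)−N} ≠ 0). Then the following are equivalent: (a) h(x)·p_n(x)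 = c^{n+N−1}_{n+N}·p_{n+N}(x) + Σ_{k=0}^{2N−1} c^{n+N−1}_{n+N−1−k}·p_{n+N−1−k}(x) for every n ∈ ℕ (terms with negative subscript omitted); (b) h(x)·B_m(x) = A_m·B_{m+1}(x) + 𝔅_m·B_m(x) + C_m·B_{m−1}(x) for every m ∈ ℕ, with B_{−1} := 0; (c) z·V_m(z) = A_m·V_{m+1}(z) + 𝔅_m·V_m(z) + C_m·V_{m−1}(z) for every m ∈ ℕ, with V_{−1} := 0. -/
open Polynomial Matrix Finset

noncomputable section

abbrev Mat (N : ℕ) := Matrix (Fin N) (Fin N) ℝ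

/-- A vector of linear functionals `U = (u^1, …, u^N)ᵀ`. -/
abbrev VecFun (N : ℕ) := Fin N → (Polynomial ℝ →ₗ[ℝ] ℝ)

/-- The matrix `(qU)(P)`: its `(i,j)` entry is `u^j (q * P i)`. -/
def matUq {N : ℕ} (U : VecFun N) (q : Polynomial ℝ) (P : Fin N → Polynomial ℝ) : Mat N :=
  Matrix.of fun i j => U j (q * P i)

/-- The matrix `U(P)`: its `(i,j)` entry is `u^j (P i)`. -/
def matVF {N : ℕ} (U : VecFun N) (P : Fin N → Polynomial ℝ) : Mat N :=
  Matrix.of fun i j => U j (P i)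

/-- `P_0(x) = (1, x, …, x^{N-1})ᵀ`. -/
def P0v (N : ℕ) : Fin N → Polynomial ℝ := fun i => X ^ (i : ℕ)

/-- `P_j(x) = h(x)^j • P_0(x)`. -/
def Pvec (N : ℕ) (h : Polynomial ℝ) (j : ℕ) : Fin N → Polynomial ℝ := fun i => h ^ j * X ^ (i : ℕ)

/-- The `n`-th moment `𝒰_n = U(P_n)`. -/
def Umom (N : ℕ) (U : VecFun N) (h : Polynomial ℝ) (n : ℕ) : Mat N := matUq U (h ^ n) (P0v N)

def UpperTri {N : ℕ} {R : Type*} [Zero R] (A : Matrix (Fin N) (Fin N) R) : Prop :=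
  ∀ i j : Fin N, (j : ℕ) < (i : ℕ) → A i j = 0

def LowerTri {N : ℕ} {R : Type*} [Zero R] (A : Matrix (Fin N) (Fin N) R) : Prop :=
  ∀ i j : Fin N, (i : ℕ) < (j : ℕ) → A i j = 0

/-- Quasi-definiteness: every leading principal submatrix (of any size `n`) of the block
Hankel moment matrices `D_m = (𝒰_{i+j})` is nonsingular.  The `n × n` leading principal
submatrix has `(a,b)` entry `u^{b % N} (h^{a/N + b/N} * x^{a % N})`. -/
def QuasiDef (N : ℕ) (hN : 0 < N) (U : VecFun N) (h : Polynomial ℝ) : Prop :=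
  ∀ n : ℕ, IsUnit (Matrix.det (Matrix.of fun a b : Fin n =>
    U ⟨(b : ℕ) % N, Nat.mod_lt _ hN⟩ (h ^ ((a : ℕ) / N + (b : ℕ) / N) * X ^ ((a : ℕ) % N))))

/-- The vector polynomial `B_m = (p_{mN}, …, p_{(m+1)N-1})ᵀ`. -/
def Bvec (N : ℕ) (p : ℕ → Polynomial ℝ) (m : ℕ) : Fin N → Polynomial ℝ :=
  fun i => p (m * N + (i : ℕ))

/-- `(A_m)_{ij} = c^{(m+1)N-1+i}_{(m+1)N+j}` for `j ≤ i`, `0` otherwise (lower triangular).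
Here `c n j` encodes `c^{n+N-1}_j`. -/
def Amat (N : ℕ) (c : ℕ → ℕ → ℝ) (m : ℕ) : Mat N :=
  Matrix.of fun i j : Fin N =>
    if (j : ℕ) ≤ (i : ℕ) then c (m * N + (i : ℕ)) ((m + 1) * N + (j : ℕ)) else 0

/-- `(𝔅_m)_{ij} = c^{(m+1)N-1+i}_{mN+j}`. -/
def Bmat (N : ℕ) (c : ℕ → ℕ → ℝ) (m : ℕ) : Mat N :=
  Matrix.of fun i j : Fin N => c (m * N + (i : ℕ)) (m * N + (j : ℕ))

/-- `(C_m)_{ij} = c^{(m+1)N-1+i}_{(m-1)N+j}` for `i ≤ j`, `0` otherwise (upper triangular). -/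
def Cmat (N : ℕ) (c : ℕ → ℕ → ℝ) (m : ℕ) : Mat N :=
  Matrix.of fun i j : Fin N =>
    if (i : ℕ) ≤ (j : ℕ) then c (m * N + (i : ℕ)) ((m - 1) * N + (j : ℕ)) else 0

/-- (a): the `(2N+1)`-term recurrence `h p_n = c^{n+N-1}_{n+N} p_{n+N} + ∑_{k=0}^{2N-1}
c^{n+N-1}_{n+N-1-k} p_{n+N-1-k}` (terms with negative subscript omitted). -/
def PropA (N : ℕ) (h : Polynomial ℝ) (p : ℕ → Polynomial ℝ) (c : ℕ → ℕ → ℝ) : Prop :=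
  ∀ n : ℕ, h * p n = Polynomial.C (c n (n + N)) * p (n + N)
    + ∑ jj ∈ Finset.Icc (n - N) (n + N - 1), Polynomial.C (c n jj) * p jj

/-- (b): the three-term recurrence with matrix coefficients for the vector polynomials,
with `B_{-1} := 0`. -/
def PropB (N : ℕ) (h : Polynomial ℝ) (p : ℕ → Polynomial ℝ) (c : ℕ → ℕ → ℝ) : Prop :=
  ∀ (m : ℕ) (i : Fin N), h * Bvec N p m i =
      (∑ j : Fin N, Polynomial.C (Amat N c m i j) * Bvec N p (m + 1) j)
    + (∑ j : Fin N, Polynomial.C (Bmat N c m i j) * Bvec N p m j)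
    + (∑ j : Fin N, Polynomial.C (Cmat N c m i j) * (if m = 0 then 0 else Bvec N p (m - 1) j))

/-- (c): the three-term recurrence for the matrix polynomials `V_m`, with `V_{-1} := 0`. -/
def PropC (N : ℕ) (c : ℕ → ℕ → ℝ) (V : ℕ → Polynomial (Mat N)) : Prop :=
  ∀ m : ℕ, X * V m = Polynomial.C (Amat N c m) * V (m + 1)
    + Polynomial.C (Bmat N c m) * V m
    + Polynomial.C (Cmat N c m) * (if m = 0 then 0 else V (m - 1))

/-- The vector polynomial `P(h(x)) · P_0(x)` attached to a matrix polynomial `P`. -/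
def vecOfMatPoly {N : ℕ} (h : Polynomial ℝ) (P : Polynomial (Mat N)) (i : Fin N) : Polynomial ℝ :=
  ∑ j : Fin N, (matPolyEquiv.symm P i j).comp h * X ^ (j : ℕ)

section VecOfMatPoly

variable {N : ℕ} (h : Polynomial ℝ)

lemma vecOfMatPoly_zero : vecOfMatPoly h (0 : Polynomial (Mat N)) = 0 := by
  ext1 i
  simp [vecOfMatPoly]

lemma vecOfMatPoly_add (P Q : Polynomial (Mat N)) :
    vecOfMatPoly h (P + Q) = vecOfMatPoly h P + vecOfMatPoly h Q := by
  ext1 i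
  simp [vecOfMatPoly, add_mul, Finset.sum_add_distrib]

lemma vecOfMatPoly_X_mul (P : Polynomial (Mat N)) (i : Fin N) :
    vecOfMatPoly h (X * P) i = h * vecOfMatPoly h P i := by
  simp [vecOfMatPoly, Matrix.diagonal_mul, Finset.mul_sum, mul_assoc]

lemma vecOfMatPoly_C_mul (A : Mat N) (P : Polynomial (Mat N)) (i : Fin N) :
    vecOfMatPoly h (Polynomial.C A * P) i = ∑ j, Polynomial.C (A i j) * vecOfMatPoly h P j := by
  simp only [vecOfMatPoly, map_mul, matPolyEquiv_symm_C, Matrix.mul_apply, Matrix.map_apply,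
    Polynomial.sum_comp, Polynomial.mul_comp, Polynomial.C_comp, Finset.sum_mul,
    Finset.mul_sum, mul_assoc]
  exact Finset.sum_comm

lemma vecOfMatPoly_eq_sum (P : Polynomial (Mat N)) (i : Fin N) :
    vecOfMatPoly h P i =
      P.sum fun k A => ∑ j : Fin N, Polynomial.C (A i j) * (h ^ k * X ^ (j : ℕ)) := by
  induction P using Polynomial.induction_on' with
  | add P Q hP hQ =>
    rw [vecOfMatPoly_add, Pi.add_apply, hP, hQ, Polynomial.sum_add_index]
    · simp
    · simp [add_mul, Finset.sum_add_distrib]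
  | monomial k A =>
    rw [Polynomial.sum_monomial_index _ _ (by simp)]
    refine Finset.sum_congr rfl fun j _ => ?_
    have hmon : matPolyEquiv.symm (monomial k A) i j = monomial k (A i j) := by
      ext l
      rw [matPolyEquiv_symm_apply_coeff, coeff_monomial, coeff_monomial]
      split_ifs <;> simp
    rw [hmon, monomial_comp, mul_assoc]

variable {h}

/-- The powers `h ^ k * X ^ j` with `j < N = deg h` are linearly independent. -/
lemma eq_zero_of_sum_comp_mul_X_pow_eq_zero (hh : h.natDegree = N) (q : Fin N → Polynomial ℝ)
    (hq : ∑ j : Fin N, (q j).comp h * X ^ (j : ℕ) = 0) : q = 0 := by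
  have hne : ∀ j, q j ≠ 0 → (q j).comp h ≠ 0 := by
    intro j hj h0
    have hpos : 0 < N := j.pos
    rcases comp_eq_zero_iff.mp h0 with h1 | ⟨-, h2⟩
    · exact hj h1
    · rw [h2, natDegree_C] at hh
      omega
  have hdisj := degree_sum_eq_of_disjoint (fun j : Fin N => (q j).comp h * X ^ (j : ℕ))
    Finset.univ (by
      rintro i ⟨-, hi⟩ j ⟨-, hj⟩ hij heq
      have hdeg : ((q i).comp h * X ^ (i : ℕ)).natDegree =
          ((q j).comp h * X ^ (j : ℕ)).natDegree := natDegree_eq_of_degree_eq heq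
      rw [natDegree_mul_X_pow _ (left_ne_zero_of_mul hi),
        natDegree_mul_X_pow _ (left_ne_zero_of_mul hj), natDegree_comp, natDegree_comp,
        hh] at hdeg
      have hmod := congrArg (· % N) hdeg
      simp only [Nat.mul_add_mod_self_right, Nat.mod_eq_of_lt i.isLt,
        Nat.mod_eq_of_lt j.isLt] at hmod
      exact hij (Fin.ext hmod))
  rw [hq, degree_zero, eq_comm, Finset.sup_eq_bot_iff] at hdisj
  ext1 j
  by_contra hj
  have := degree_eq_bot.mp (hdisj j (Finset.mem_univ j))
  exact hne j hj (by simpa using this)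

lemma vecOfMatPoly_injective (hh : h.natDegree = N) :
    Function.Injective (vecOfMatPoly (N := N) h) := by
  intro P Q hPQ
  refine matPolyEquiv.symm.injective (Matrix.ext fun i j => ?_)
  have hrow : (fun j => matPolyEquiv.symm P i j - matPolyEquiv.symm Q i j) = 0 :=
    eq_zero_of_sum_comp_mul_X_pow_eq_zero hh _ (by
      simpa [vecOfMatPoly, sub_mul, Finset.sum_sub_distrib, sub_eq_zero] using congrFun hPQ i)
  exact sub_eq_zero.mp (congrFun hrow j)

end VecOfMatPoly

/-- The band `[n - N, n + N]` with `n = m N + i` splits along blocks of length `N`. -/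
lemma sum_band_eq_sum_blocks {M : Type*} [AddCommMonoid M] {N : ℕ} (f : ℕ → M) (m : ℕ)
    (i : Fin N) :
    f (m * N + i + N) + ∑ k ∈ Finset.Icc (m * N + i - N) (m * N + i + N - 1), f k =
      (∑ j : Fin N, if (j : ℕ) ≤ i then f ((m + 1) * N + j) else 0) +
      (∑ j : Fin N, f (m * N + j)) +
      ∑ j : Fin N, if m = 0 then 0 else if (i : ℕ) ≤ j then f ((m - 1) * N + j) else 0 := by
  have hi := i.isLt
  have hIcc : Finset.Icc (m * N + i - N) (m * N + i + N - 1) =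
      Finset.Ico (m * N + i - N) (m * N + i + N) := by
    ext k
    simp only [Finset.mem_Icc, Finset.mem_Ico]
    omega
  have hA : (∑ j : Fin N, if (j : ℕ) ≤ i then f ((m + 1) * N + j) else 0) =
      ∑ k ∈ Finset.Ico ((m + 1) * N) (m * N + i + N + 1), f k := by
    rw [Fin.sum_univ_eq_sum_range (fun j => if j ≤ i then f ((m + 1) * N + j) else 0) N,
      ← Finset.sum_filter, Finset.sum_Ico_eq_sum_range]
    congr 1
    ext k
    simp only [Finset.mem_filter, Finset.mem_range, add_mul]
    omega
  have hB : (∑ j : Fin N, f (m * N + j)) = ∑ k ∈ Finset.Ico (m * N) ((m + 1) * N), f k := by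
    rw [Fin.sum_univ_eq_sum_range (fun j => f (m * N + j)) N, Finset.sum_Ico_eq_sum_range]
    congr 2
    simp [add_mul]
  have hC : (∑ j : Fin N, if m = 0 then 0 else if (i : ℕ) ≤ j then f ((m - 1) * N + j) else 0) =
      ∑ k ∈ Finset.Ico (m * N + i - N) (m * N), f k := by
    rcases m with _ | m
    · simp
    · simp only [Nat.add_eq_zero_iff, one_ne_zero, and_false, if_false, Nat.add_sub_cancel]
      rw [Fin.sum_univ_eq_sum_range (fun j => if (i : ℕ) ≤ j then f (m * N + j) else 0) N,
        ← Finset.sum_filter]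
      have hset : Finset.Ico ((m + 1) * N + i - N) ((m + 1) * N) =
          Finset.Ico (i + m * N) (N + m * N) := by
        congr 1 <;> rw [add_mul] <;> omega
      rw [hset, ← Finset.sum_Ico_add f]
      congr 1
      ext k
      simp only [Finset.mem_filter, Finset.mem_range, Finset.mem_Ico]
      omega
  have hle : (m + 1) * N = m * N + N := by ring
  rw [hA, hB, hC, hIcc, add_comm (f _), ← Finset.sum_Ico_succ_top (by omega),
    add_comm (∑ k ∈ Finset.Ico ((m + 1) * N) _, f k), add_comm _ (∑ k ∈ Finset.Ico _ (m * N), f k),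
    Finset.sum_Ico_consecutive f (by omega) (by omega),
    Finset.sum_Ico_consecutive f (by omega) (by omega)]

lemma propA_iff_propB (N : ℕ) (hN : 0 < N) (h : Polynomial ℝ) (p : ℕ → Polynomial ℝ)
    (c : ℕ → ℕ → ℝ) : PropA N h p c ↔ PropB N h p c := by
  have hrow : ∀ (m : ℕ) (i : Fin N),
      Polynomial.C (c (m * N + i) (m * N + i + N)) * p (m * N + i + N)
        + ∑ k ∈ Finset.Icc (m * N + i - N) (m * N + i + N - 1),
          Polynomial.C (c (m * N + i) k) * p k =
      (∑ j : Fin N, Polynomial.C (Amat N c m i j) * Bvec N p (m + 1) j)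
      + (∑ j : Fin N, Polynomial.C (Bmat N c m i j) * Bvec N p m j)
      + (∑ j : Fin N, Polynomial.C (Cmat N c m i j) *
          (if m = 0 then 0 else Bvec N p (m - 1) j)) := by
    intro m i
    rw [sum_band_eq_sum_blocks (fun k => Polynomial.C (c (m * N + i) k) * p k) m i]
    refine congrArg₂ (· + ·) (congrArg₂ (· + ·) ?_ rfl) ?_
    · refine Finset.sum_congr rfl fun j _ => ?_
      simp only [Amat, Bvec, Matrix.of_apply]
      split_ifs <;> simp
    · refine Finset.sum_congr rfl fun j _ => ?_
      simp only [Cmat, Bvec, Matrix.of_apply]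
      split_ifs <;> simp
  constructor
  · intro hA m i
    rw [← hrow]
    exact hA _
  · intro hB n
    have hn : n / N * N + n % N = n := Nat.div_add_mod' n N
    have hBn := (hB (n / N) ⟨n % N, Nat.mod_lt n hN⟩).trans (hrow _ _).symm
    simpa only [Bvec, hn] using hBn

lemma propB_iff_propC (N : ℕ) (h : Polynomial ℝ) (hh : h.natDegree = N)
    (p : ℕ → Polynomial ℝ) (c : ℕ → ℕ → ℝ) (V : ℕ → Polynomial (Mat N))
    (hV : ∀ m, Bvec N p m = vecOfMatPoly h (V m)) : PropB N h p c ↔ PropC N c V := by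
  refine forall_congr' fun m => ?_
  have hprev : ∀ j, (if m = 0 then 0 else Bvec N p (m - 1) j) =
      vecOfMatPoly h (if m = 0 then 0 else V (m - 1)) j := by
    intro j
    split_ifs
    · simp [vecOfMatPoly_zero]
    · rw [hV]
  rw [← (vecOfMatPoly_injective hh).eq_iff, funext_iff]
  refine forall_congr' fun i => ?_
  simp only [hprev]
  simp only [hV, vecOfMatPoly_add, Pi.add_apply, vecOfMatPoly_X_mul, vecOfMatPoly_C_mul]

theorem statement0
    (N : ℕ) (hN : 0 < N) (h : Polynomial ℝ) (hh : h.natDegree = N)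
    (p : ℕ → Polynomial ℝ) (hdeg : ∀ n, (p n).natDegree = n)
    (c : ℕ → ℕ → ℝ) (hc : ∀ n, N ≤ n → c n (n - N) ≠ 0)
    (V : ℕ → Polynomial (Mat N)) (hVdeg : ∀ m, (V m).natDegree = m)
    (hVB : ∀ (m : ℕ) (i : Fin N),
      Bvec N p m i = (V m).sum fun k A => ∑ j : Fin N, Polynomial.C (A i j) * (h ^ k * X ^ (j : ℕ))) :
    (PropA N h p c ↔ PropB N h p c) ∧ (PropB N h p c ↔ PropC N c V) := by
  exact ⟨propA_iff_propB N hN h p c, propB_iff_propC N h hh p c V fun m => funext fun i =>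
    (hVB m i).trans (vecOfMatPoly_eq_sum h (V m) i).symm⟩
end
end

section
/- Let U be a vector of linear functionals. Then U is quasi-definite if and only if there exist a sequence {B_m}_{m∈ℕ} of vector polynomials of the form B_m = Σ_{j=0}^m α_j^m P_j with all α_j^m ∈ M_N(ℝ) and α_m^m a nonsingular lower triangular matrix, and a sequence {Δ_m}_{m∈ℕ} of nonsingular upper triangular matrices, such that (h^k U)(B_m) = Δ_m·δ_{k,m} for all 0 ≤ k ≤ m and all m ∈ ℕ. Moreover, these sequences are unique if each α_m^m is additionally required to be lower triangular with unit diagonal. -/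
open Polynomial Matrix Finset

noncomputable section

/-- The vector polynomial `B_m = ∑_{j=0}^m α_j^m P_j` built from the matrix
coefficients `α`. -/
def Bofα (N : ℕ) (h : Polynomial ℝ) (α : ℕ → ℕ → Mat N) (m : ℕ) : Fin N → Polynomial ℝ :=
  fun i => ∑ j ∈ Finset.range (m + 1), ∑ s : Fin N,
    Polynomial.C (α m j i s) * (h ^ j * X ^ (s : ℕ))

/-- The scalar entries of the infinite block Hankel moment matrix. -/
def hankelEntry {N : ℕ} (hN : 0 < N) (U : VecFun N) (h : Polynomial ℝ) (a b : ℕ) : ℝ :=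
  U ⟨b % N, Nat.mod_lt _ hN⟩ (h ^ (a / N + b / N) * X ^ (a % N))

/-- A row vector annihilated by a nonsingular leading principal submatrix vanishes. -/
theorem eq_zero_of_leading_vecMul_eq_zero {H : ℕ → ℕ → ℝ} {n : ℕ}
    (hdet : IsUnit (Matrix.det (Matrix.of fun a b : Fin n => H a b))) {d : ℕ → ℝ}
    (hd : ∀ c < n, ∑ a ∈ range n, d a * H a c = 0) : ∀ a < n, d a = 0 := by
  have hv : (fun a : Fin n => d a) = 0 := by
    refine Matrix.eq_zero_of_vecMul_eq_zero hdet.ne_zero ?_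
    ext c
    simpa [Matrix.vecMul, dotProduct, Finset.sum_range] using hd c c.2
  intro a ha
  exact congrFun hv ⟨a, ha⟩

/-- If a lower triangular `L` makes `L * H` upper triangular with nonvanishing diagonal, then the
leading principal submatrices of `H` are nonsingular. -/
theorem isUnit_det_leading {H L : ℕ → ℕ → ℝ}
    (hlow : ∀ r, ∀ c < r, ∑ a ∈ range (r + 1), L r a * H a c = 0)
    (hdiag : ∀ r, ∑ a ∈ range (r + 1), L r a * H a r ≠ 0) (n : ℕ) :
    IsUnit (Matrix.det (Matrix.of fun a b : Fin n => H a b)) := by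
  set A : Matrix (Fin n) (Fin n) ℝ := Matrix.of fun r a => if (a : ℕ) ≤ r then L r a else 0
  have hmul : ∀ r c : Fin n, (A * Matrix.of fun a b : Fin n => H a b) r c =
      ∑ a ∈ range ((r : ℕ) + 1), L r a * H a c := by
    intro r c
    have hsub : range ((r : ℕ) + 1) ⊆ range n := Finset.range_subset_range.2 r.2
    rw [Matrix.mul_apply]
    simp only [A, Matrix.of_apply]
    rw [← Finset.sum_range fun a => (if a ≤ (r : ℕ) then L r a else 0) * H a c,
      ← Finset.sum_subset hsub]
    · refine Finset.sum_congr rfl fun a ha => ?_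
      rw [if_pos (Nat.lt_succ_iff.1 (Finset.mem_range.1 ha))]
    · intro a _ ha
      rw [if_neg (fun hle => ha (Finset.mem_range.2 (Nat.lt_succ_iff.2 hle))), zero_mul]
  have htri : (A * Matrix.of fun a b : Fin n => H a b).IsUpperTriangular := by
    intro r c hcr
    rw [hmul]
    exact hlow r c hcr
  have hdet := Matrix.det_of_isUpperTriangular htri
  rw [Matrix.det_mul] at hdet
  refine isUnit_iff_ne_zero.2 (right_ne_zero_of_mul (hdet.trans_ne ?_))
  refine Finset.prod_ne_zero_iff.2 fun r _ => ?_
  rw [hmul]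
  exact hdiag r

/-- Nonsingularity of the leading principal submatrices of `H` provides a lower triangular `L`
with nonvanishing diagonal such that `L * H` is upper triangular with unit diagonal. -/
theorem exists_lower_of_isUnit_det_leading {H : ℕ → ℕ → ℝ}
    (hdet : ∀ n : ℕ, IsUnit (Matrix.det (Matrix.of fun a b : Fin n => H a b))) :
    ∃ L : ℕ → ℕ → ℝ, ∀ r, L r r ≠ 0 ∧ (∀ c, r < c → L r c = 0) ∧
      ∀ c ≤ r, ∑ a ∈ range (r + 1), L r a * H a c = if c = r then 1 else 0 := by
  suffices hrow : ∀ r, ∃ v : ℕ → ℝ, v r ≠ 0 ∧ (∀ c, r < c → v c = 0) ∧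
      ∀ c ≤ r, ∑ a ∈ range (r + 1), v a * H a c = if c = r then 1 else 0 by
    choose L hL using hrow
    exact ⟨L, hL⟩
  intro r
  set M : Matrix (Fin (r + 1)) (Fin (r + 1)) ℝ := Matrix.of fun a b => H a b
  set w : Fin (r + 1) → ℝ := Pi.single (Fin.last r) 1 ᵥ* M⁻¹
  have hw : w ᵥ* M = Pi.single (Fin.last r) 1 := by
    rw [Matrix.vecMul_vecMul, Matrix.nonsing_inv_mul _ (hdet _), Matrix.vecMul_one]
  set v : ℕ → ℝ := fun a => if ha : a < r + 1 then w ⟨a, ha⟩ else 0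
  have hv : ∀ c ≤ r, ∑ a ∈ range (r + 1), v a * H a c = if c = r then 1 else 0 := by
    intro c hc
    have hwc := congrFun hw ⟨c, Nat.lt_succ_iff.2 hc⟩
    rw [Finset.sum_range]
    simp only [v, Fin.is_lt, dif_pos]
    simpa [Matrix.vecMul, dotProduct, M, Pi.single_apply, Fin.ext_iff] using hwc
  refine ⟨v, fun hvr => ?_, fun c hc => dif_neg (by omega), hv⟩
  have hzero : ∀ a < r, v a = 0 := by
    refine eq_zero_of_leading_vecMul_eq_zero (hdet r) fun c hc => ?_
    have hvc := hv c hc.le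
    rwa [Finset.sum_range_succ, hvr, zero_mul, add_zero, if_neg hc.ne] at hvc
  have hlast := hv r le_rfl
  rw [Finset.sum_range_succ, hvr, zero_mul, add_zero, if_pos rfl,
    Finset.sum_eq_zero fun a ha => by rw [hzero a (Finset.mem_range.1 ha), zero_mul]] at hlast
  exact zero_ne_one hlast

/-- Reindexing of a block sum by quotient and remainder. -/
theorem sum_range_sum_fin_eq_sum_range_mul {N : ℕ} (hN : 0 < N) (f : ℕ → Fin N → ℝ) (M : ℕ) :
    ∑ j ∈ range M, ∑ s : Fin N, f j s =
      ∑ a ∈ range (M * N), f (a / N) ⟨a % N, Nat.mod_lt _ hN⟩ := by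
  induction M with
  | zero => simp
  | succ M ih =>
    rw [Finset.sum_range_succ, ih, Nat.succ_mul, Finset.sum_range_add]
    congr 1
    rw [Finset.sum_range]
    refine Finset.sum_congr rfl fun s _ => ?_
    congr 1
    · rw [mul_comm, Nat.mul_add_div hN, Nat.div_eq_of_lt s.2, add_zero]
    · ext
      simp [Nat.mod_eq_of_lt s.2]

/-- Entries of `(h^k U)(B_m)` as rows of the coefficients against columns of the Hankel matrix. -/
theorem matUq_Bofα_apply {N : ℕ} (hN : 0 < N) (U : VecFun N) (h : Polynomial ℝ)
    {α : ℕ → ℕ → Mat N} {m : ℕ} (hα : LowerTri (α m m)) (k : ℕ) (i j : Fin N) :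
    matUq U (h ^ k) (Bofα N h α m) i j = ∑ a ∈ range (m * N + i + 1),
      α m (a / N) i ⟨a % N, Nat.mod_lt _ hN⟩ * hankelEntry hN U h a (k * N + j) := by
  have hdiv : (k * N + j) / N = k := by
    rw [mul_comm, Nat.mul_add_div hN, Nat.div_eq_of_lt j.2, add_zero]
  have hmod : (⟨(k * N + j) % N, Nat.mod_lt _ hN⟩ : Fin N) = j := by
    ext
    simp [Nat.mod_eq_of_lt j.2]
  have hblock : matUq U (h ^ k) (Bofα N h α m) i j = ∑ l ∈ range (m + 1), ∑ s : Fin N,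
      α m l i s * U j (h ^ (l + k) * X ^ (s : ℕ)) := by
    simp only [matUq, Bofα, Matrix.of_apply, Finset.mul_sum, map_sum]
    refine Finset.sum_congr rfl fun l _ => Finset.sum_congr rfl fun s _ => ?_
    rw [← smul_eq_mul (α m l i s), ← map_smul, Polynomial.smul_eq_C_mul]
    congr 1
    ring
  have hsub : range (m * N + i + 1) ⊆ range ((m + 1) * N) := by
    refine Finset.range_subset_range.2 ?_
    have := i.2
    rw [Nat.succ_mul]
    omega
  rw [hblock, sum_range_sum_fin_eq_sum_range_mul hN
    (fun l s => α m l i s * U j (h ^ (l + k) * X ^ (s : ℕ))), ← Finset.sum_subset hsub]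
  · simp only [hankelEntry, hdiv, hmod]
  · intro a ha hai
    rw [Finset.mem_range] at ha hai
    have hle : m * N ≤ a := by omega
    have ham : a / N = m := Nat.div_eq_of_lt_le hle ha
    have hdm := Nat.div_add_mod' a N
    rw [ham] at hdm ⊢
    rw [hα i _ (by show (i : ℕ) < a % N; omega), zero_mul]

theorem UpperTri.isUnit_det_iff {N : ℕ} {A : Mat N} (hA : UpperTri A) :
    IsUnit A.det ↔ ∀ i, A i i ≠ 0 := by
  have htri : A.IsUpperTriangular := fun i j hij => hA i j hij
  rw [Matrix.det_of_isUpperTriangular htri, isUnit_iff_ne_zero, Finset.prod_ne_zero_iff]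
  simp

theorem LowerTri.isUnit_det_iff {N : ℕ} {A : Mat N} (hA : LowerTri A) :
    IsUnit A.det ↔ ∀ i, A i i ≠ 0 := by
  have htri : A.IsLowerTriangular := fun i j hij => hA i j hij
  rw [Matrix.det_of_isLowerTriangular _ htri, isUnit_iff_ne_zero, Finset.prod_ne_zero_iff]
  simp

/-- Below the diagonal, a left-orthogonal sequence annihilates the Hankel matrix. -/
theorem matUq_Bofα_eq_zero_of_lt {N : ℕ} {U : VecFun N} {h : Polynomial ℝ}
    {α : ℕ → ℕ → Mat N} {Δ : ℕ → Mat N} (hΔ : ∀ m, UpperTri (Δ m))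
    (horth : ∀ m k, k ≤ m → matUq U (h ^ k) (Bofα N h α m) = if k = m then Δ m else 0)
    {m k : ℕ} {i j : Fin N} (hlt : k * N + j < m * N + i) :
    matUq U (h ^ k) (Bofα N h α m) i j = 0 := by
  have hkm : k ≤ m := by
    by_contra! hmk
    have := Nat.mul_le_mul_right N (Nat.succ_le_of_lt hmk)
    have := i.2
    rw [Nat.succ_mul] at *
    omega
  rw [horth m k hkm]
  split_ifs with hk
  · subst hk
    exact hΔ k i j (by omega)
  · rfl

/-- A left-orthogonal sequence forces quasi-definiteness. -/
theorem quasiDef_of_orthogonal {N : ℕ} (hN : 0 < N) {U : VecFun N} {h : Polynomial ℝ}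
    {α : ℕ → ℕ → Mat N} {Δ : ℕ → Mat N} (hα : ∀ m, LowerTri (α m m))
    (hΔ : ∀ m, UpperTri (Δ m) ∧ IsUnit (Δ m).det)
    (horth : ∀ m k, k ≤ m → matUq U (h ^ k) (Bofα N h α m) = if k = m then Δ m else 0) :
    QuasiDef N hN U h := by
  have hentry : ∀ r c, ∑ a ∈ range (r + 1),
      α (r / N) (a / N) ⟨r % N, Nat.mod_lt _ hN⟩ ⟨a % N, Nat.mod_lt _ hN⟩ *
        hankelEntry hN U h a c =
      matUq U (h ^ (c / N)) (Bofα N h α (r / N)) ⟨r % N, Nat.mod_lt _ hN⟩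
        ⟨c % N, Nat.mod_lt _ hN⟩ := by
    intro r c
    simp only [matUq_Bofα_apply hN U h (hα (r / N)), Nat.div_add_mod']
  refine isUnit_det_leading (H := hankelEntry hN U h)
    (L := fun r a => α (r / N) (a / N) ⟨r % N, Nat.mod_lt _ hN⟩ ⟨a % N, Nat.mod_lt _ hN⟩) ?_ ?_
  · intro r c hcr
    rw [hentry]
    exact matUq_Bofα_eq_zero_of_lt (fun m => (hΔ m).1) horth
      (by simpa only [Nat.div_add_mod'] using hcr)
  · intro r
    rw [hentry, horth _ _ le_rfl, if_pos rfl]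
    exact (hΔ _).1.isUnit_det_iff.1 (hΔ _).2 _

/-- Quasi-definiteness provides a left-orthogonal sequence. -/
theorem QuasiDef.exists_orthogonal {N : ℕ} {hN : 0 < N} {U : VecFun N} {h : Polynomial ℝ}
    (hU : QuasiDef N hN U h) :
    ∃ (α : ℕ → ℕ → Mat N) (Δ : ℕ → Mat N),
      (∀ m, LowerTri (α m m) ∧ IsUnit (α m m).det) ∧
      (∀ m, UpperTri (Δ m) ∧ IsUnit (Δ m).det) ∧
      (∀ m k, k ≤ m → matUq U (h ^ k) (Bofα N h α m) = if k = m then Δ m else 0) := by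
  obtain ⟨L, hL⟩ := exists_lower_of_isUnit_det_leading (H := hankelEntry hN U h) hU
  set α : ℕ → ℕ → Mat N := fun m l => Matrix.of fun i s => L (m * N + i) (l * N + s) with hαdef
  have hα : ∀ m, LowerTri (α m m) := fun m i j hij => (hL _).2.1 _ (by omega)
  have hentry : ∀ m k (i j : Fin N), k * N + j ≤ m * N + i →
      matUq U (h ^ k) (Bofα N h α m) i j = if k * N + j = m * N + i then 1 else 0 := by
    intro m k i j hle
    rw [matUq_Bofα_apply hN U h (hα m), ← (hL _).2.2 _ hle]
    simp only [hαdef, Matrix.of_apply, Nat.div_add_mod']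
  have hupper : ∀ m, UpperTri (matUq U (h ^ m) (Bofα N h α m)) := by
    intro m i j hji
    rw [hentry m m i j (by omega), if_neg (by omega)]
  refine ⟨α, fun m => matUq U (h ^ m) (Bofα N h α m), fun m => ⟨hα m, ?_⟩,
    fun m => ⟨hupper m, ?_⟩, fun m k hkm => ?_⟩
  · exact (hα m).isUnit_det_iff.2 fun i => (hL _).1
  · refine (hupper m).isUnit_det_iff.2 fun i => ?_
    rw [hentry m m i i le_rfl, if_pos rfl]
    exact one_ne_zero
  · split_ifs with hk
    · rw [hk]
    · ext i j
      have hmul := Nat.mul_le_mul_right N (Nat.succ_le_of_lt (lt_of_le_of_ne hkm hk))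
      rw [Nat.succ_mul] at hmul
      have := j.2
      rw [hentry m k i j (by omega), if_neg (by omega), Matrix.zero_apply]

/-- Left-orthogonal sequences with unit lower triangular leading coefficients have the same
coefficients. -/
theorem coeff_eq_of_orthogonal {N : ℕ} (hN : 0 < N) {U : VecFun N} {h : Polynomial ℝ}
    {α α' : ℕ → ℕ → Mat N} {Δ Δ' : ℕ → Mat N}
    (hα : ∀ m, LowerTri (α m m) ∧ ∀ i, α m m i i = 1)
    (hΔ : ∀ m, UpperTri (Δ m) ∧ IsUnit (Δ m).det)
    (horth : ∀ m k, k ≤ m → matUq U (h ^ k) (Bofα N h α m) = if k = m then Δ m else 0)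
    (hα' : ∀ m, LowerTri (α' m m) ∧ ∀ i, α' m m i i = 1)
    (hΔ' : ∀ m, UpperTri (Δ' m))
    (horth' : ∀ m k, k ≤ m → matUq U (h ^ k) (Bofα N h α' m) = if k = m then Δ' m else 0)
    {m l : ℕ} (hlm : l ≤ m) : α m l = α' m l := by
  have hU := quasiDef_of_orthogonal hN (fun m => (hα m).1) hΔ horth
  have hdiv : ∀ (k : ℕ) (s : Fin N), (k * N + s) / N = k := fun k s => by
    rw [mul_comm, Nat.mul_add_div hN, Nat.div_eq_of_lt s.2, add_zero]
  have hmod : ∀ (k : ℕ) (s : Fin N), (⟨(k * N + s) % N, Nat.mod_lt _ hN⟩ : Fin N) = s :=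
    fun k s => by
      ext
      simp [Nat.mod_eq_of_lt s.2]
  ext i s
  rcases lt_or_ge (l * N + s) (m * N + i) with hlt | hge
  · set d : ℕ → ℝ := fun a => α m (a / N) i ⟨a % N, Nat.mod_lt _ hN⟩ -
      α' m (a / N) i ⟨a % N, Nat.mod_lt _ hN⟩ with hd
    have hdlast : d (m * N + i) = 0 := by
      simp only [hd, hdiv, hmod, (hα m).2, (hα' m).2, sub_self]
    have hzero := eq_zero_of_leading_vecMul_eq_zero (H := hankelEntry hN U h)
      (hU (m * N + i)) (d := d) ?_ (l * N + s) hlt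
    · simpa only [hd, hdiv, hmod, sub_eq_zero] using hzero
    · intro c hc
      rw [← Nat.div_add_mod' c N] at hc
      have hB := matUq_Bofα_eq_zero_of_lt (fun m => (hΔ m).1) horth
        (j := ⟨c % N, Nat.mod_lt _ hN⟩) hc
      have hB' := matUq_Bofα_eq_zero_of_lt hΔ' horth'
        (j := ⟨c % N, Nat.mod_lt _ hN⟩) hc
      rw [matUq_Bofα_apply hN U h (hα m).1] at hB
      rw [matUq_Bofα_apply hN U h (hα' m).1] at hB'
      have hsum : ∑ a ∈ range (m * N + i + 1), d a * hankelEntry hN U h a c = 0 := by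
        simp only [Nat.div_add_mod'] at hB hB'
        simp only [hd, sub_mul, Finset.sum_sub_distrib, hB, hB', sub_self]
      rwa [Finset.sum_range_succ, hdlast, zero_mul, add_zero] at hsum
  · obtain rfl : l = m := by
      refine le_antisymm hlm ?_
      by_contra! hl
      have := Nat.mul_le_mul_right N (Nat.succ_le_of_lt hl)
      have := s.2
      rw [Nat.succ_mul] at *
      omega
    rcases (show (i : ℕ) ≤ s by omega).eq_or_lt with his | his
    · rw [← Fin.ext his, (hα l).2, (hα' l).2]
    · rw [(hα l).1 i s his, (hα' l).1 i s his]

theorem statement1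
    (N : ℕ) (hN : 0 < N) (h : Polynomial ℝ) (hh : h.natDegree = N) (U : VecFun N) :
    -- existence: U quasi-definite iff a left-orthogonal sequence exists
    (QuasiDef N hN U h ↔
      ∃ (α : ℕ → ℕ → Mat N) (Δ : ℕ → Mat N),
        (∀ m, LowerTri (α m m) ∧ IsUnit (α m m).det) ∧
        (∀ m, UpperTri (Δ m) ∧ IsUnit (Δ m).det) ∧
        (∀ m k, k ≤ m →
          matUq U (h ^ k) (Bofα N h α m) = if k = m then Δ m else 0)) ∧
    -- uniqueness, when each `α_m^m` is required to be lower triangular with unit diagonal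
    (∀ (α α' : ℕ → ℕ → Mat N) (Δ Δ' : ℕ → Mat N),
      (∀ m, LowerTri (α m m) ∧ (∀ i, α m m i i = 1)) →
      (∀ m, UpperTri (Δ m) ∧ IsUnit (Δ m).det) →
      (∀ m k, k ≤ m → matUq U (h ^ k) (Bofα N h α m) = if k = m then Δ m else 0) →
      (∀ m, LowerTri (α' m m) ∧ (∀ i, α' m m i i = 1)) →
      (∀ m, UpperTri (Δ' m) ∧ IsUnit (Δ' m).det) →
      (∀ m k, k ≤ m → matUq U (h ^ k) (Bofα N h α' m) = if k = m then Δ' m else 0) →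
      ∀ m j, j ≤ m → α m j = α' m j ∧ Δ m = Δ' m) := by
  refine ⟨⟨QuasiDef.exists_orthogonal, ?_⟩, ?_⟩
  · rintro ⟨α, Δ, hα, hΔ, horth⟩
    exact quasiDef_of_orthogonal hN (fun m => (hα m).1) hΔ horth
  · intro α α' Δ Δ' hα hΔ horth hα' hΔ' horth' m j hj
    have hcoeff : ∀ l ≤ m, α m l = α' m l := fun l hl =>
      coeff_eq_of_orthogonal hN hα hΔ horth hα' (fun m => (hΔ' m).1) horth' hl
    refine ⟨hcoeff j hj, ?_⟩
    have hB : Bofα N h α m = Bofα N h α' m := by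
      ext1 i
      refine Finset.sum_congr rfl fun l hl => ?_
      rw [hcoeff l (Nat.lt_succ_iff.1 (Finset.mem_range.1 hl))]
    have hm := horth m m le_rfl
    rw [hB, horth' m m le_rfl, if_pos rfl, if_pos rfl] at hm
    exact hm.symm
end
end

section
/- Let U be a quasi-definite vector of linear functionals and let {B_m}_{m∈ℕ} be vector polynomials with B_m = Σ_{j=0}^m α_j^m P_j, α_m^m nonsingular, and B_0 = P_0. (Forward direction) If {B_m} is left-orthogonal with respect to U, with (h^m U)(B_m) = Δ_m nonsingular upper triangular, then there exist N×N matrices A_m, B'_m such that h(x)·B_m(x) = A_m·B_{m+1}(x) + B'_m·B_m(x) + C_m·B_{m−1}(x) for all m ≥ 1, where C_m := Δ_m·Δ_{m−1}^{−1} is nonsingular upper triangular, so that Δ_m = C_m·C_{m−1}⋯C_1·Δ_0. (Converse direction) If there exist N×N matrices A_m, B'_m and nonsingular upper triangular matrices C_m such that h(x)·B_m(x) = A_m·B_{m+1}(x) + B'_m·B_m(x) + C_m·B_{m−1}(x) for all m ≥ 1, then for every nonsingular upper triangular matrix Δ_0 there exists a vector of linear functionals U' such that (h^k U')(B_m) =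 δ_{k,m}·C_m·C_{m−1}⋯C_1·Δ_0 for all 0 ≤ k ≤ m, i.e. {B_m} is left-orthogonal with respect to U'. -/
open Polynomial Matrix Finset

noncomputable section

section MatrixAction

open scoped Matrix.Module

variable {N : ℕ}

theorem UpperTri.mul {A B : Mat N} (hA : UpperTri A) (hB : UpperTri B) : UpperTri (A * B) :=
  Matrix.BlockTriangular.mul (b := fun i : Fin N => (i : ℕ)) (fun i j => hA i j)
    (fun i j => hB i j)

theorem UpperTri.inv {A : Mat N} (hA : UpperTri A) (hdet : IsUnit A.det) : UpperTri A⁻¹ := by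
  let _ := A.invertibleOfIsUnitDet hdet
  exact Matrix.blockTriangular_inv_of_blockTriangular (b := fun i : Fin N => (i : ℕ))
    (fun i j => hA i j)

/-- `P ↦ (qU)(P)` as a linear map over the matrix ring. -/
def matUqLin (U : VecFun N) (q : ℝ[X]) : (Fin N → ℝ[X]) →ₗ[Mat N] Mat N where
  toFun := matUq U q
  map_add' P Q := by
    ext i j
    simp [matUq, mul_add]
  map_smul' M P := by
    ext i j
    simp [matUq, Matrix.mul_apply, Finset.mul_sum]

@[simp]
theorem matUqLin_apply (U : VecFun N) (q : ℝ[X]) (P : Fin N → ℝ[X]) :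
    matUqLin U q P = matUq U q P := rfl

/-- Multiplication by a scalar polynomial as a linear map over the matrix ring. -/
def polyMulLin (N : ℕ) (q : ℝ[X]) : (Fin N → ℝ[X]) →ₗ[Mat N] (Fin N → ℝ[X]) where
  toFun P i := q * P i
  map_add' P Q := by
    ext1 i
    simp [mul_add]
  map_smul' M P := by
    ext1 i
    simp [Finset.mul_sum]

theorem polyMulLin_apply (q : ℝ[X]) (P : Fin N → ℝ[X]) (i : Fin N) :
    polyMulLin N q P i = q * P i := rfl

theorem matUq_polyMulLin (U : VecFun N) (q r : ℝ[X]) (P : Fin N → ℝ[X]) :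
    matUq U q (polyMulLin N r P) = matUq U (q * r) P := by
  ext i j
  simp [matUq, polyMulLin_apply, mul_assoc]

theorem polyMulLin_Pvec (h : ℝ[X]) (j : ℕ) :
    polyMulLin N h (Pvec N h j) = Pvec N h (j + 1) := by
  ext1 i
  simp only [polyMulLin_apply, Pvec]
  ring

theorem sum_C_mul_eq_smul (M : Mat N) (P : Fin N → ℝ[X]) (i : Fin N) :
    ∑ j : Fin N, Polynomial.C (M i j) * P j = (M • P) i := by
  simp [Polynomial.C_mul']

/-- If every `B m` is a matrix combination of `P 0, …, P m` with nonsingular leading coefficient,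
then the first `n` terms of `P` lie in the span of the first `n` terms of `B`. -/
theorem mem_span_of_triangular {α : ℕ → ℕ → Mat N} (hα : ∀ m, IsUnit (α m m).det)
    {P B : ℕ → Fin N → ℝ[X]} (hB : ∀ m, B m = ∑ j ∈ range (m + 1), α m j • P j)
    {k n : ℕ} (hk : k < n) :
    P k ∈ Submodule.span (Mat N) (B '' (range n : Set ℕ)) := by
  induction k using Nat.strong_induction_on with
  | _ k ih =>
    have hP : P k = (α k k)⁻¹ • (B k - ∑ j ∈ range k, α k j • P j) := by
      rw [hB k, sum_range_succ, add_sub_cancel_left, ← mul_smul,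
        Matrix.nonsing_inv_mul _ (hα k), one_smul]
    rw [hP]
    refine Submodule.smul_mem _ _ (Submodule.sub_mem _ ?_ (Submodule.sum_mem _ fun j hj => ?_))
    · exact Submodule.subset_span ⟨k, by simpa using hk, rfl⟩
    · have hjk := Finset.mem_range.mp hj
      exact Submodule.smul_mem _ _ (ih j hjk (hjk.trans hk))

/-- Left-orthogonality forces a three-term recurrence for multiplication by `h`. -/
theorem exists_three_term_of_leftOrthogonal {h : ℝ[X]} {U : VecFun N} {α : ℕ → ℕ → Mat N}
    (hα : ∀ m, IsUnit (α m m).det) {B : ℕ → Fin N → ℝ[X]}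
    (hB : ∀ m, B m = ∑ j ∈ range (m + 1), α m j • Pvec N h j)
    {Δ : ℕ → Mat N} (hΔ : ∀ m, IsUnit (Δ m).det)
    (horth : ∀ m k, k ≤ m → matUq U (h ^ k) (B m) = if k = m then Δ m else 0) (n : ℕ) :
    ∃ A Bp : Mat N, polyMulLin N h (B (n + 1)) =
      A • B (n + 2) + Bp • B (n + 1) + (Δ (n + 1) * (Δ n)⁻¹) • B n := by
  have hmem : polyMulLin N h (B (n + 1)) ∈
      Submodule.span (Mat N) (B '' (range (n + 3) : Set ℕ)) := by
    rw [hB, map_sum]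
    refine Submodule.sum_mem _ fun j hj => ?_
    rw [map_smul, polyMulLin_Pvec]
    have := Finset.mem_range.mp hj
    exact Submodule.smul_mem _ _ (mem_span_of_triangular hα hB (by omega))
  obtain ⟨β, hβ⟩ := (Submodule.mem_span_image_finset_iff_exists_fun' (Mat N)).mp hmem
  have hcoeff : ∀ k ≤ n, (∀ j < k, β j = 0) →
      β k * Δ k = matUq U (h ^ (k + 1)) (B (n + 1)) := by
    intro k hk hlow
    rw [pow_succ, ← matUq_polyMulLin, ← hβ, ← matUqLin_apply, map_sum, Finset.sum_eq_single k]
    · simp [horth k k le_rfl]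
    · intro j _ hjk
      rcases hjk.lt_or_gt with hlt | hgt
      · rw [hlow j hlt, zero_smul, map_zero]
      · simp [horth j k hgt.le, hgt.ne]
    · intro hk'
      exact absurd (Finset.mem_range.mpr (by omega)) hk'
  have hsolve : ∀ k, β k = β k * Δ k * (Δ k)⁻¹ := fun k =>
    (Matrix.mul_nonsing_inv_cancel_right _ _ (hΔ k)).symm
  have hzero : ∀ k < n, β k = 0 := by
    intro k
    induction k using Nat.strong_induction_on with
    | _ k ih =>
      intro hk
      rw [hsolve k, hcoeff k hk.le fun j hj => ih j hj (hj.trans hk),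
        horth _ _ (by omega), if_neg (by omega), zero_mul]
  have hn : β n = Δ (n + 1) * (Δ n)⁻¹ := by
    rw [hsolve n, hcoeff n le_rfl hzero, horth _ _ le_rfl, if_pos rfl]
  refine ⟨β (n + 2), β (n + 1), ?_⟩
  rw [← hβ, sum_range_succ, sum_range_succ, sum_range_succ,
    Finset.sum_eq_zero fun j hj => by rw [hzero j (Finset.mem_range.mp hj), zero_smul], hn]
  abel

/-- The solution of a block lower triangular system, by forward substitution. -/
def forwardSubst (α : ℕ → ℕ → Mat N) (D : ℕ → Mat N) : ℕ → Mat N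
  | m => (α m m)⁻¹ * (D m - ∑ j : Fin m, α m j * forwardSubst α D j)
decreasing_by exact j.2

theorem sum_mul_forwardSubst {α : ℕ → ℕ → Mat N} (hα : ∀ m, IsUnit (α m m).det)
    (D : ℕ → Mat N) (m : ℕ) :
    ∑ j ∈ range (m + 1), α m j * forwardSubst α D j = D m := by
  rw [sum_range_succ, forwardSubst, Matrix.mul_nonsing_inv_cancel_left _ _ (hα m),
    Fin.sum_univ_eq_sum_range fun j => α m j * forwardSubst α D j]
  abel

/-- The polynomials `h ^ j * X ^ s` with `s < N = deg h`, ordered by degree. -/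
def powMulSequence (hN : 0 < N) (h : ℝ[X]) (hh : h.natDegree = N) : Polynomial.Sequence ℝ where
  elems' n := h ^ (n / N) * X ^ (n % N)
  degree_eq' n := by
    have h0 : h ≠ 0 := by
      rintro rfl
      simp at hh
      omega
    rw [degree_mul, degree_pow, degree_X_pow, degree_eq_natDegree h0, hh]
    rw [nsmul_eq_mul]
    exact_mod_cast Nat.div_add_mod' n N

/-- The moments of a vector of linear functionals can be prescribed arbitrarily. -/
theorem exists_vecFun_moments (hN : 0 < N) (h : ℝ[X]) (hh : h.natDegree = N)
    (Mom : ℕ → Mat N) : ∃ U : VecFun N, ∀ j, matUq U 1 (Pvec N h j) = Mom j := by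
  let S := powMulSequence hN h hh
  have hS : ∀ n, IsUnit (S n).leadingCoeff := fun n => by simp
  refine ⟨fun c => (S.basis hS).constr ℝ fun n => Mom (n / N) ⟨n % N, Nat.mod_lt _ hN⟩ c,
    fun j => ?_⟩
  ext i c
  have hdiv : (j * N + i) / N = j := by
    rw [mul_comm, Nat.mul_add_div hN, Nat.div_eq_of_lt i.2, add_zero]
  have hmod : (j * N + i) % N = i := by
    rw [mul_comm, Nat.mul_add_mod, Nat.mod_eq_of_lt i.2]
  have hP : 1 * Pvec N h j i = S.basis hS (j * N + i) := by
    rw [Polynomial.Sequence.basis_eq_self, one_mul]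
    change _ = h ^ ((j * N + i) / N) * X ^ ((j * N + i) % N)
    rw [hdiv, hmod, Pvec]
  simp only [matUq, Matrix.of_apply]
  rw [hP, Module.Basis.constr_basis]
  simp only [hdiv, hmod]

/-- A three-term recurrence forces left-orthogonality, once it holds for `k = 0`. -/
theorem leftOrthogonal_of_three_term {h : ℝ[X]} {U : VecFun N} {B : ℕ → Fin N → ℝ[X]}
    {A Bp Cc Δ : ℕ → Mat N}
    (hrec : ∀ n, polyMulLin N h (B (n + 1)) =
      A (n + 1) • B (n + 2) + Bp (n + 1) • B (n + 1) + Cc (n + 1) • B n)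
    (hΔ : ∀ n, Δ (n + 1) = Cc (n + 1) * Δ n)
    (hbase : ∀ m, matUq U 1 (B m) = if m = 0 then Δ 0 else 0) (m k : ℕ) (hk : k ≤ m) :
    matUq U (h ^ k) (B m) = if k = m then Δ m else 0 := by
  induction k generalizing m with
  | zero =>
    rw [pow_zero, hbase]
    rcases Nat.eq_zero_or_pos m with rfl | hm
    · rfl
    · rw [if_neg hm.ne', if_neg hm.ne]
  | succ k ih =>
    obtain ⟨n, rfl⟩ : ∃ n, m = n + 1 := ⟨m - 1, by omega⟩
    rw [pow_succ, ← matUq_polyMulLin, hrec, ← matUqLin_apply, map_add, map_add, map_smul,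
      map_smul, map_smul]
    simp only [matUqLin_apply, smul_eq_mul]
    rw [ih (n + 2) (by omega), ih (n + 1) (by omega), ih n (by omega), if_neg (by omega),
      if_neg (by omega)]
    by_cases hkn : k = n <;> simp [hkn, hΔ]

theorem statement2
    (N : ℕ) (hN : 0 < N) (h : Polynomial ℝ) (hh : h.natDegree = N)
    (U : VecFun N) (hqd : QuasiDef N hN U h)
    (α : ℕ → ℕ → Mat N) (hα : ∀ m, IsUnit (α m m).det) (hα0 : α 0 0 = 1)
    (B : ℕ → Fin N → Polynomial ℝ)
    (hB : ∀ (m : ℕ) (i : Fin N), B m i = ∑ j ∈ Finset.range (m + 1), ∑ s : Fin N,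
      Polynomial.C (α m j i s) * (h ^ j * X ^ (s : ℕ))) :
    -- forward direction
    (∀ Δ : ℕ → Mat N,
      (∀ m, UpperTri (Δ m) ∧ IsUnit (Δ m).det) →
      (∀ m k, k ≤ m → matUq U (h ^ k) (B m) = if k = m then Δ m else 0) →
      ∃ A Bp : ℕ → Mat N, ∀ m, 1 ≤ m →
        (∀ i : Fin N, h * B m i =
            (∑ j : Fin N, Polynomial.C (A m i j) * B (m + 1) j)
          + (∑ j : Fin N, Polynomial.C (Bp m i j) * B m j)
          + (∑ j : Fin N, Polynomial.C ((Δ m * (Δ (m - 1))⁻¹) i j) * B (m - 1) j))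
        ∧ UpperTri (Δ m * (Δ (m - 1))⁻¹) ∧ IsUnit (Δ m * (Δ (m - 1))⁻¹).det
        ∧ Δ m = (Δ m * (Δ (m - 1))⁻¹) * Δ (m - 1)) ∧
    -- converse direction
    (∀ (A Bp Cc : ℕ → Mat N),
      (∀ m, 1 ≤ m → UpperTri (Cc m) ∧ IsUnit (Cc m).det) →
      (∀ m, 1 ≤ m → ∀ i : Fin N, h * B m i =
          (∑ j : Fin N, Polynomial.C (A m i j) * B (m + 1) j)
        + (∑ j : Fin N, Polynomial.C (Bp m i j) * B m j)
        + (∑ j : Fin N, Polynomial.C (Cc m i j) * B (m - 1) j)) →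
      ∀ Δ0 : Mat N, UpperTri Δ0 → IsUnit Δ0.det →
        ∃ (U' : VecFun N) (Δ : ℕ → Mat N),
          Δ 0 = Δ0 ∧ (∀ m, 1 ≤ m → Δ m = Cc m * Δ (m - 1)) ∧
          (∀ m k, k ≤ m → matUq U' (h ^ k) (B m) = if k = m then Δ m else 0)) := by
  have hB' : ∀ m, B m = ∑ j ∈ range (m + 1), α m j • Pvec N h j := by
    intro m
    ext1 i
    rw [hB, Finset.sum_apply]
    exact Finset.sum_congr rfl fun j _ => sum_C_mul_eq_smul (α m j) (Pvec N h j) i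
  simp only [sum_C_mul_eq_smul]
  refine ⟨fun Δ hΔ horth => ?_, fun A Bp Cc _ hrec Δ0 _ _ => ?_⟩
  · choose A Bp hrec using
      exists_three_term_of_leftOrthogonal hα hB' (fun m => (hΔ m).2) horth
    refine ⟨fun m => A (m - 1), fun m => Bp (m - 1), fun m hm => ?_⟩
    obtain ⟨n, rfl⟩ : ∃ n, m = n + 1 := ⟨m - 1, by omega⟩
    rw [Nat.add_sub_cancel]
    refine ⟨fun i => congrFun (hrec n) i, (hΔ _).1.mul ((hΔ n).1.inv (hΔ n).2), ?_, ?_⟩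
    · rw [Matrix.det_mul]
      exact (hΔ _).2.mul (Matrix.isUnit_nonsing_inv_det _ (hΔ n).2)
    · exact (Matrix.nonsing_inv_mul_cancel_right _ _ (hΔ n).2).symm
  · let Δ : ℕ → Mat N := fun m => Nat.rec Δ0 (fun n D => Cc (n + 1) * D) m
    obtain ⟨U', hU'⟩ := exists_vecFun_moments hN h hh
      (forwardSubst α fun m => if m = 0 then Δ0 else 0)
    refine ⟨U', Δ, rfl, fun m hm => ?_, leftOrthogonal_of_three_term
      (fun n => funext fun i => hrec (n + 1) (by omega) i) (fun n => rfl) fun m => ?_⟩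
    · obtain ⟨n, rfl⟩ : ∃ n, m = n + 1 := ⟨m - 1, by omega⟩
      rfl
    · rw [hB' m, ← matUqLin_apply, map_sum]
      simp only [map_smul, matUqLin_apply, hU', smul_eq_mul]
      exact sum_mul_forwardSubst hα _ m

end MatrixAction
end
end

section
/- Let U be a quasi-definite vector of linear functionals. Let {B_m}_{m∈ℕ} with B_m = Σ_{j=0}^m α_j^m P_j (α_m^m nonsingular) be left-orthogonal with respect to U, with (h^m U)(B_m) = Δ_m, and let {G_n}_{n∈ℕ} with G_n(z) = Σ_{j=0}^n β_j^n z^j (β_n^n nonsingular) be right-orthogonal with respect to U, with (G_n(h(x))ᵀU)(P_n) = Θ_n. Then {B_m} and {G_n} are bi-orthogonal with respect to U, i.e. ((G_n(h(x)))ᵀU)(B_m) = I_{N×N}·δ_{n,m} for all n, m ∈ ℕ, if and only if Δ_m = (β_m^m)^{−1} and Θ_m = (α_m^m)^{−1} for every m ∈ ℕ. In that case L_n := (G_n(h(x)))ᵀ·U is the dual vector sequence of {B_m}. -/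
open Polynomial Matrix Finset

noncomputable section

/-- The vector of functionals `(G_n(h(x)))ᵀ·U`, where `G_n(z) = ∑_{k≤n} β_k^n z^k`. -/
def LGf (N : ℕ) (U : VecFun N) (h : Polynomial ℝ) (β : ℕ → ℕ → Mat N) (n : ℕ) : VecFun N :=
  fun j => ∑ k ∈ Finset.range (n + 1), ∑ s : Fin N,
    (β n k) s j • ((U s).comp (LinearMap.mulLeft ℝ (h ^ k)))

/-- `(qU)(∑_j A_j P_j) = ∑_j A_j (qU)(P_j)`. -/
theorem matUq_sum_Pvec {N : ℕ} (U : VecFun N) (q h : Polynomial ℝ) (A : ℕ → Mat N) (m : ℕ)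
    (B : Fin N → Polynomial ℝ)
    (hB : ∀ i : Fin N, B i = ∑ j ∈ Finset.range (m + 1), ∑ s : Fin N,
      Polynomial.C (A j i s) * (h ^ j * X ^ (s : ℕ))) :
    matUq U q B = ∑ j ∈ Finset.range (m + 1), A j * matUq U q (Pvec N h j) := by
  ext i t
  simp only [matUq, Pvec, Matrix.of_apply, hB, Matrix.sum_apply, Matrix.mul_apply,
    Finset.mul_sum, map_sum, ← Polynomial.smul_eq_C_mul, mul_smul_comm, map_smul, smul_eq_mul]

/-- Evaluating `(G_n(h(x)))ᵀU` on a vector polynomial. -/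
theorem matVF_LGf {N : ℕ} (U : VecFun N) (h : Polynomial ℝ) (β : ℕ → ℕ → Mat N) (n : ℕ)
    (P : Fin N → Polynomial ℝ) :
    matVF (LGf N U h β n) P = ∑ k ∈ Finset.range (n + 1), matUq U (h ^ k) P * β n k := by
  ext i t
  simp [matVF, LGf, matUq, Matrix.sum_apply, Matrix.mul_apply, LinearMap.sum_apply, mul_comm]

theorem statement8
    (N : ℕ) (hN : 0 < N) (h : Polynomial ℝ) (hh : h.natDegree = N)
    (U : VecFun N) (hqd : QuasiDef N hN U h)
    -- {B_m} left-orthogonal with respect to U, with (h^m U)(B_m) = Δ_m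
    (α : ℕ → ℕ → Mat N) (hα : ∀ m, IsUnit (α m m).det)
    (B : ℕ → Fin N → Polynomial ℝ)
    (hB : ∀ (m : ℕ) (i : Fin N), B m i = ∑ j ∈ Finset.range (m + 1), ∑ s : Fin N,
      Polynomial.C (α m j i s) * (h ^ j * X ^ (s : ℕ)))
    (Δ : ℕ → Mat N) (hΔ : ∀ m, UpperTri (Δ m) ∧ IsUnit (Δ m).det)
    (horthB : ∀ m k, k ≤ m → matUq U (h ^ k) (B m) = if k = m then Δ m else 0)
    -- {G_n} right-orthogonal with respect to U, with (G_n(h(x))ᵀU)(P_n) = Θ_n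
    (β : ℕ → ℕ → Mat N) (hβ : ∀ n, IsUnit (β n n).det)
    (Θ : ℕ → Mat N) (hΘ : ∀ n, LowerTri (Θ n) ∧ IsUnit (Θ n).det)
    (horthG : ∀ n j, j ≤ n →
      (∑ k ∈ Finset.range (n + 1), matUq U (h ^ k) (Pvec N h j) * β n k)
        = if j = n then Θ n else 0) :
    -- bi-orthogonality holds iff Δ_m = (β_m^m)⁻¹ and Θ_m = (α_m^m)⁻¹
    ((∀ n m, (∑ j ∈ Finset.range (n + 1), matUq U (h ^ j) (B m) * β n j)
        = if n = m then (1 : Mat N) else 0)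
      ↔ (∀ m, Δ m = (β m m)⁻¹ ∧ Θ m = (α m m)⁻¹)) ∧
    -- in that case, L_n := (G_n(h(x)))ᵀ·U is the dual vector sequence of {B_m}
    ((∀ n m, (∑ j ∈ Finset.range (n + 1), matUq U (h ^ j) (B m) * β n j)
        = if n = m then (1 : Mat N) else 0)
      → ∀ n m, matVF (LGf N U h β n) (B m) = if n = m then (1 : Mat N) else 0) := by
  have left_of_le : ∀ n m, n ≤ m →
      (∑ j ∈ Finset.range (n + 1), matUq U (h ^ j) (B m) * β n j)
        = if n = m then Δ m * β m m else 0 := by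
    intro n m hnm
    have vanish : ∑ j ∈ Finset.range n, matUq U (h ^ j) (B m) * β n j = 0 := by
      refine Finset.sum_eq_zero fun j hj => ?_
      have hjn := Finset.mem_range.mp hj
      rw [horthB m j (by omega), if_neg (by omega), zero_mul]
    rw [Finset.sum_range_succ, vanish, zero_add, horthB m n hnm]
    split_ifs with hn
    · rw [hn]
    · rw [zero_mul]
  have right_of_le : ∀ n m, m ≤ n →
      (∑ j ∈ Finset.range (n + 1), matUq U (h ^ j) (B m) * β n j)
        = if n = m then α m m * Θ m else 0 := by
    intro n m hmn
    have swap : (∑ k ∈ Finset.range (n + 1), matUq U (h ^ k) (B m) * β n k)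
        = ∑ j ∈ Finset.range (m + 1), α m j *
          ∑ k ∈ Finset.range (n + 1), matUq U (h ^ k) (Pvec N h j) * β n k := by
      simp only [fun k => matUq_sum_Pvec U (h ^ k) h (α m) m (B m) (hB m), Finset.sum_mul,
        Finset.mul_sum, Matrix.mul_assoc]
      exact Finset.sum_comm
    have vanish : ∑ j ∈ Finset.range m, α m j *
        ∑ k ∈ Finset.range (n + 1), matUq U (h ^ k) (Pvec N h j) * β n k = 0 := by
      refine Finset.sum_eq_zero fun j hj => ?_
      have hjm := Finset.mem_range.mp hj
      rw [horthG n j (by omega), if_neg (by omega), mul_zero]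
    rw [swap, Finset.sum_range_succ, vanish, zero_add, horthG n m hmn]
    by_cases hn : n = m
    · subst hn
      simp
    · rw [if_neg hn, if_neg (Ne.symm hn), mul_zero]
  refine ⟨⟨fun hbi m => ⟨?_, ?_⟩, fun hinv n m => ?_⟩, fun hbi n m => ?_⟩
  · have hdiag := left_of_le m m le_rfl
    rw [hbi m m, if_pos rfl, if_pos rfl] at hdiag
    exact (Matrix.inv_eq_left_inv hdiag.symm).symm
  · have hdiag := right_of_le m m le_rfl
    rw [hbi m m, if_pos rfl, if_pos rfl] at hdiag
    exact (Matrix.inv_eq_right_inv hdiag.symm).symm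
  · rcases le_total n m with hnm | hmn
    · rw [left_of_le n m hnm, (hinv m).1, Matrix.nonsing_inv_mul _ (hβ m)]
    · rw [right_of_le n m hmn, (hinv m).2, Matrix.mul_nonsing_inv _ (hα m)]
  · rw [matVF_LGf, hbi n m]
end
end

section
/- Suppose each functional u^j of the vector of linear functionals U = (u^1,…,u^N)ᵀ is given by integration against a compactly supported finite signed Borel measure μ_j on ℝ, and let L = ∪_{j=1}^N supp μ_j. Define the generalized Markov matrix function F(z), for z ∈ ℂ with |z| > sup_{x∈L} |h(x)|, as the N×N matrix with (i,j) entry ∫ x^{i−1}/(z − h(x)) dμ_j(x). Let {B_m} be vector polynomials with B_m(x) = V_m(h(x))·P_0(x), where V_m is an N×N real matrix polynomial of degree m, and let {G_n} be N×N real matrix polynomials of degree n. Then for every radius R > sup_{x∈L} |h(x)| and all n, m ∈ ℕ, the contour integral over the positively oriented circle |z| = R satisfies (1/(2πi))·∮_{|z|=R} V_m(z)·F(z)·G_n(z) dz = ((G_n(h(x)))ᵀU)(B_m). Consequently, {G_n} and {B_m} are bi-orthogonal with respect to U (i.e. ((G_n(h(x)))ᵀU)(B_m) = I_{N×N}·δ_{n,m}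 for all n, m) if and only if (1/(2πi))·∮_{|z|=R} V_m(z)·F(z)·G_n(z) dz = I_{N×N}·δ_{n,m} for all n, m. -/
open Polynomial Matrix Finset

noncomputable section

open MeasureTheory

/-- `N×N` real matrix polynomials. -/
abbrev MatPoly (N : ℕ) := Polynomial (Mat N)

/-- `(G(h(x))ᵀ U)(P) = ∑_k (h^k U)(P) · G_k`. -/
def GhU {N : ℕ} (U : VecFun N) (h : Polynomial ℝ) (G : MatPoly N)
    (P : Fin N → Polynomial ℝ) : Mat N :=
  G.sum fun k A => matUq U (h ^ k) P * A

/-- Evaluation of a real matrix polynomial at a complex point. -/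
def MPevalC {N : ℕ} (P : MatPoly N) (z : ℂ) : Matrix (Fin N) (Fin N) ℂ :=
  P.sum fun k A => z ^ k • A.map (fun r : ℝ => (r : ℂ))

/-- The support of a Borel measure on `ℝ`. -/
def msupp (μ : Measure ℝ) : Set ℝ :=
  {x | ∀ Uo : Set ℝ, IsOpen Uo → x ∈ Uo → μ Uo ≠ 0}

theorem msupp_eq_support (μ : Measure ℝ) : msupp μ = μ.support := by
  ext x
  simp only [Measure.support_eq_forall_isOpen, msupp, Set.mem_ofPred_eq, pos_iff_ne_zero]
  exact ⟨fun H u hx hu => H u hu hx, fun H u hu hx => H u hx hu⟩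

section CauchyTransform

variable {μ : Measure ℝ} [IsFiniteMeasure μ] {K : Set ℝ} {R : ℝ} {g w : ℝ → ℝ}

theorem integrable_cauchyKernel (hK : IsCompact K) (hμ : ∀ᵐ x ∂μ, x ∈ K)
    (hg : Continuous g) (hw : Continuous w) (hR : ∀ x ∈ K, |w x| < R)
    {φ : ℝ → ℂ} (hφ : Continuous φ) :
    Integrable (Function.uncurry fun θ x => φ θ * ((g x : ℂ) / (circleMap 0 R θ - (w x : ℂ))))
      ((volume.restrict (Set.uIoc 0 (2 * Real.pi))).prod μ) := by
  have hcont : ContinuousOn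
      (Function.uncurry fun θ x => φ θ * ((g x : ℂ) / (circleMap 0 R θ - (w x : ℂ))))
      (Set.uIcc 0 (2 * Real.pi) ×ˢ K) := by
    refine ContinuousOn.mul (by fun_prop) (ContinuousOn.div (by fun_prop) (by fun_prop) ?_)
    rintro ⟨θ, x⟩ ⟨-, hx⟩ h0
    have h1 := congrArg norm (sub_eq_zero.mp h0)
    simp only [norm_circleMap_zero, Complex.norm_real, Real.norm_eq_abs] at h1
    exact absurd (hR x hx) (by rw [← h1]; exact not_lt.mpr (le_abs_self R))
  have hint := hcont.integrableOn_compact (μ := volume.prod μ) (isCompact_uIcc.prod hK)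
  rw [IntegrableOn, ← Measure.prod_restrict, Measure.restrict_eq_self_of_ae_mem hμ] at hint
  exact hint.mono_measure
    (Measure.prod_mono (Measure.restrict_mono Set.uIoc_subset_uIcc le_rfl) le_rfl)

theorem circleIntegrable_mul_cauchyTransform (hK : IsCompact K) (hμ : ∀ᵐ x ∂μ, x ∈ K)
    (hg : Continuous g) (hw : Continuous w) (hR : ∀ x ∈ K, |w x| < R)
    {p : ℂ → ℂ} (hp : Continuous p) :
    CircleIntegrable (fun z => p z * ∫ x, (g x : ℂ) / (z - (w x : ℂ)) ∂μ) 0 R := by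
  have hint := (integrable_cauchyKernel hK hμ hg hw hR
    (hp.comp (continuous_circleMap 0 R))).integral_prod_left
  rw [circleIntegrable_def, intervalIntegrable_iff, IntegrableOn]
  simpa only [Function.uncurry, Function.comp_apply, integral_const_mul] using hint

theorem circleIntegral_mul_cauchyTransform (hK : IsCompact K) (hμ : ∀ᵐ x ∂μ, x ∈ K)
    (hg : Continuous g) (hw : Continuous w) (hR : ∀ x ∈ K, |w x| < R)
    {p : ℂ → ℂ} (hp : Differentiable ℂ p) :
    (∮ z in C(0, R), p z * ∫ x, (g x : ℂ) / (z - (w x : ℂ)) ∂μ)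
      = 2 * Real.pi * Complex.I * ∫ x, (g x : ℂ) * p (w x) ∂μ := by
  have hφ : Continuous fun θ => deriv (circleMap 0 R) θ * p (circleMap 0 R θ) := by
    have := hp.continuous
    simp only [deriv_circleMap]
    fun_prop
  have hswap := intervalIntegral_integral_swap (integrable_cauchyKernel hK hμ hg hw hR hφ)
  simp only [circleIntegral, smul_eq_mul]
  simp only [integral_const_mul, mul_assoc] at hswap
  rw [hswap, ← integral_const_mul]
  refine integral_congr_ae ?_
  filter_upwards [hμ] with x hx
  have hball : (w x : ℂ) ∈ Metric.ball (0 : ℂ) R := by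
    simpa using hR x hx
  have hcauchy := hp.differentiableOn.circleIntegral_sub_inv_smul hball
  simp only [circleIntegral, smul_eq_mul] at hcauchy
  calc _ = (g x : ℂ) * ∫ θ in (0)..(2 * Real.pi), deriv (circleMap 0 R) θ *
        ((circleMap 0 R θ - (w x : ℂ))⁻¹ * p (circleMap 0 R θ)) := by
        rw [← intervalIntegral.integral_const_mul]
        congr 1
        ext θ
        ring
    _ = _ := by
        rw [hcauchy]
        ring

end CauchyTransform

theorem MPevalC_apply {N : ℕ} (P : MatPoly N) (z : ℂ) (i j : Fin N) :
    MPevalC P z i j = ∑ k ∈ P.support, z ^ k * (P.coeff k i j : ℂ) := by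
  simp [MPevalC, Polynomial.sum, Matrix.sum_apply]

theorem MPevalC_mul_mul_MPevalC_apply {N : ℕ} (V G : MatPoly N) (A : Matrix (Fin N) (Fin N) ℂ)
    (z : ℂ) (i j : Fin N) :
    (MPevalC V z * A * MPevalC G z) i j =
      ∑ b, ∑ l ∈ G.support, ∑ k ∈ V.support, ∑ a,
        ((V.coeff k i a : ℂ) * (G.coeff l b j : ℂ)) * (z ^ (l + k) * A a b) := by
  simp only [Matrix.mul_apply, MPevalC_apply, Finset.sum_mul, Finset.mul_sum]
  refine Finset.sum_congr rfl fun b _ => ?_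
  refine Finset.sum_congr rfl fun l _ => ?_
  rw [Finset.sum_comm]
  refine Finset.sum_congr rfl fun k _ => Finset.sum_congr rfl fun a _ => ?_
  ring

theorem GhU_apply {N : ℕ} (U : VecFun N) (h : Polynomial ℝ) (V G : MatPoly N)
    (B : Fin N → Polynomial ℝ)
    (hB : ∀ i, B i = V.sum fun k A => ∑ j, Polynomial.C (A i j) * (h ^ k * X ^ (j : ℕ)))
    (i j : Fin N) :
    GhU U h G B i j =
      ∑ b, ∑ l ∈ G.support, ∑ k ∈ V.support, ∑ a,
        (V.coeff k i a * G.coeff l b j) * U b (h ^ (l + k) * X ^ (a : ℕ)) := by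
  simp only [GhU, Polynomial.sum, Matrix.sum_apply, Matrix.mul_apply, matUq, Matrix.of_apply, hB]
  rw [Finset.sum_comm]
  refine Finset.sum_congr rfl fun b _ => Finset.sum_congr rfl fun l _ => ?_
  simp only [Finset.mul_sum, map_sum, Finset.sum_mul]
  refine Finset.sum_congr rfl fun k _ => Finset.sum_congr rfl fun a _ => ?_
  rw [show h ^ l * (Polynomial.C (V.coeff k i a) * (h ^ k * X ^ (a : ℕ)))
    = V.coeff k i a • (h ^ (l + k) * X ^ (a : ℕ)) by rw [Polynomial.smul_eq_C_mul]; ring,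
    map_smul, smul_eq_mul]
  ring

theorem statement9
    (N : ℕ) (hN : 0 < N) (h : Polynomial ℝ) (hh : h.natDegree = N)
    -- the signed measures μ_j = μp_j − μn_j, finite and compactly supported
    (μp μn : Fin N → Measure ℝ)
    (hfp : ∀ j, IsFiniteMeasure (μp j)) (hfn : ∀ j, IsFiniteMeasure (μn j))
    (U : VecFun N)
    (hU : ∀ (j : Fin N) (q : Polynomial ℝ),
      U j q = (∫ x, q.eval x ∂(μp j)) - (∫ x, q.eval x ∂(μn j)))
    (L : Set ℝ) (hLdef : L = ⋃ j, (msupp (μp j) ∪ msupp (μn j))) (hLcpt : IsCompact L)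
    -- the generalized Markov matrix function
    (F : ℂ → Matrix (Fin N) (Fin N) ℂ)
    (hF : ∀ (z : ℂ) (i j : Fin N),
      F z i j = (∫ x, ((x : ℂ) ^ (i : ℕ) / (z - ((h.eval x : ℝ) : ℂ))) ∂(μp j))
              - (∫ x, ((x : ℂ) ^ (i : ℕ) / (z - ((h.eval x : ℝ) : ℂ))) ∂(μn j)))
    -- the vector polynomials B_m = V_m(h(x))·P_0(x) and matrix polynomials G_n
    (V : ℕ → MatPoly N) (hVdeg : ∀ m, (V m).natDegree = m)
    (B : ℕ → Fin N → Polynomial ℝ)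
    (hB : ∀ (m : ℕ) (i : Fin N),
      B m i = (V m).sum fun k A => ∑ j : Fin N, Polynomial.C (A i j) * (h ^ k * X ^ (j : ℕ)))
    (G : ℕ → MatPoly N) (hGdeg : ∀ n, (G n).natDegree = n)
    -- any admissible radius
    (R : ℝ) (hR : ∀ x ∈ L, |h.eval x| < R) :
    -- the contour integral computes the pairing
    (∀ (n m : ℕ) (i j : Fin N),
      (2 * Real.pi * Complex.I)⁻¹ *
          (∮ z in C(0, R), (MPevalC (V m) z * F z * MPevalC (G n) z) i j)
        = ((GhU U h (G n) (B m)) i j : ℂ)) ∧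
    -- consequently, bi-orthogonality w.r.t. U ⟺ bi-orthogonality w.r.t. F
    ((∀ n m : ℕ, GhU U h (G n) (B m) = if n = m then (1 : Mat N) else 0)
      ↔ (∀ n m : ℕ,
          (Matrix.of fun i j : Fin N =>
            (2 * Real.pi * Complex.I)⁻¹ *
              (∮ z in C(0, R), (MPevalC (V m) z * F z * MPevalC (G n) z) i j))
          = if n = m then (1 : Matrix (Fin N) (Fin N) ℂ) else 0)) := by
  have hae : ∀ j, (∀ᵐ x ∂(μp j), x ∈ L) ∧ ∀ᵐ x ∂(μn j), x ∈ L := by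
    intro j
    have hsub : msupp (μp j) ∪ msupp (μn j) ⊆ L :=
      hLdef ▸ Set.subset_iUnion (fun j => msupp (μp j) ∪ msupp (μn j)) j
    rw [msupp_eq_support, msupp_eq_support, Set.union_subset_iff] at hsub
    exact ⟨Filter.mem_of_superset Measure.support_mem_ae hsub.1,
      Filter.mem_of_superset Measure.support_mem_ae hsub.2⟩
  have hFk : ∀ (k : ℕ) (a b : Fin N), (fun z : ℂ => z ^ k * F z a b) = fun z =>
      z ^ k * (∫ x, ((x ^ (a : ℕ) : ℝ) : ℂ) / (z - ((h.eval x : ℝ) : ℂ)) ∂(μp b))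
        - z ^ k * (∫ x, ((x ^ (a : ℕ) : ℝ) : ℂ) / (z - ((h.eval x : ℝ) : ℂ)) ∂(μn b)) := by
    intro k a b
    funext z
    rw [hF, mul_sub]
    push_cast
    rfl
  have hpow : ∀ a : ℕ, Continuous fun x : ℝ => x ^ a := fun a => continuous_pow a
  have hp : ∀ (k : ℕ) (a b : Fin N), CircleIntegrable
      (fun z => z ^ k * ∫ x, ((x ^ (a : ℕ) : ℝ) : ℂ) / (z - ((h.eval x : ℝ) : ℂ)) ∂(μp b)) 0 R :=
    fun k a b => circleIntegrable_mul_cauchyTransform hLcpt (hae b).1 (hpow a) h.continuous hR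
      (continuous_pow k)
  have hn : ∀ (k : ℕ) (a b : Fin N), CircleIntegrable
      (fun z => z ^ k * ∫ x, ((x ^ (a : ℕ) : ℝ) : ℂ) / (z - ((h.eval x : ℝ) : ℂ)) ∂(μn b)) 0 R :=
    fun k a b => circleIntegrable_mul_cauchyTransform hLcpt (hae b).2 (hpow a) h.continuous hR
      (continuous_pow k)
  have hci : ∀ (k : ℕ) (a b : Fin N), CircleIntegrable (fun z => z ^ k * F z a b) 0 R := by
    intro k a b
    rw [hFk]
    exact (hp k a b).sub (hn k a b)
  have hmoment : ∀ (k : ℕ) (a b : Fin N), (∮ z in C(0, R), z ^ k * F z a b)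
      = 2 * Real.pi * Complex.I * (U b (h ^ k * X ^ (a : ℕ)) : ℂ) := by
    intro k a b
    rw [hFk, circleIntegral.integral_sub (hp k a b) (hn k a b),
      circleIntegral_mul_cauchyTransform hLcpt (hae b).1 (hpow a) h.continuous hR
        (differentiable_pow k),
      circleIntegral_mul_cauchyTransform hLcpt (hae b).2 (hpow a) h.continuous hR
        (differentiable_pow k), hU, ← mul_sub, Complex.ofReal_sub, ← integral_complex_ofReal,
      ← integral_complex_ofReal]
    simp [mul_comm]
  have hmain : ∀ (n m : ℕ) (i j : Fin N),
      (2 * Real.pi * Complex.I)⁻¹ *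
          (∮ z in C(0, R), (MPevalC (V m) z * F z * MPevalC (G n) z) i j)
        = ((GhU U h (G n) (B m)) i j : ℂ) := by
    intro n m i j
    have hterm : ∀ (c : ℂ) (k : ℕ) (a b : Fin N),
        CircleIntegrable (fun z => c * (z ^ k * F z a b)) 0 R :=
      fun c k a b => (hci k a b).const_mul c
    simp only [MPevalC_mul_mul_MPevalC_apply]
    rw [GhU_apply U h (V m) (G n) (B m) (hB m),
      circleIntegral.integral_fun_sum fun b _ => CircleIntegrable.fun_sum _ fun l _ =>
        CircleIntegrable.fun_sum _ fun k _ => CircleIntegrable.fun_sum _ fun a _ =>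
          hterm _ _ _ _]
    push_cast
    rw [Finset.mul_sum]
    refine Finset.sum_congr rfl fun b _ => ?_
    rw [circleIntegral.integral_fun_sum fun l _ => CircleIntegrable.fun_sum _ fun k _ =>
      CircleIntegrable.fun_sum _ fun a _ => hterm _ _ _ _, Finset.mul_sum]
    refine Finset.sum_congr rfl fun l _ => ?_
    rw [circleIntegral.integral_fun_sum fun k _ => CircleIntegrable.fun_sum _ fun a _ =>
      hterm _ _ _ _, Finset.mul_sum]
    refine Finset.sum_congr rfl fun k _ => ?_
    rw [circleIntegral.integral_fun_sum fun a _ => hterm _ _ _ _, Finset.mul_sum]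
    refine Finset.sum_congr rfl fun a _ => ?_
    rw [circleIntegral.integral_const_mul, hmoment, mul_left_comm,
      inv_mul_cancel_left₀ Complex.two_pi_I_ne_zero]
  refine ⟨hmain, forall₂_congr fun n m => ?_⟩
  simp only [hmain]
  rw [← (Matrix.map_injective Complex.ofReal_injective).eq_iff]
  have hite : (if n = m then (1 : Mat N) else 0).map Complex.ofReal
      = if n = m then (1 : Matrix (Fin N) (Fin N) ℂ) else 0 := by
    split_ifs <;> simp
  rw [hite]
  rfl
end
end

section
/- Let {A_m}, {B_m}, {C_m} be sequences of N×N real matrices and let {V_m}_{m∈ℕ} and {G_m}_{m∈ℕ} be sequences of N×N matrix polynomials satisfying, for all m ≥ 0, the recurrences x·V_m(x) = A_m·V_{m+1}(x) + B_m·V_m(x) + C_m·V_{m−1}(x) and z·G_m(z) = G_{m−1}(z)·A_{m−1} + G_m(z)·B_m + G_{m+1}(z)·C_{m+1}, with V_{−1} := 0 and G_{−1} := 0. Then for every m ∈ ℕ and all x, z the Christoffel–Darboux type formula holds: (x − z)·Σ_{k=0}^m G_k(z)·V_k(x) = G_m(z)·A_m·V_{m+1}(x) − G_{m+1}(z)·C_{m+1}·V_m(x).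 -/
open Polynomial Matrix Finset

noncomputable section

/-- Evaluation of a matrix polynomial at a real point. -/
def MPeval {N : ℕ} (P : MatPoly N) (x : ℝ) : Mat N :=
  P.sum fun k A => x ^ k • A

/-- Evaluation at a real point as a ring homomorphism: scalar matrices are central. -/
def evalScalarHom (N : ℕ) (x : ℝ) : MatPoly N →+* Mat N :=
  Polynomial.eval₂RingHom' (RingHom.id (Mat N)) (algebraMap ℝ (Mat N) x)
    fun a => (Algebra.commutes x a).symm

theorem MPeval_eq_evalScalarHom {N : ℕ} (P : MatPoly N) (x : ℝ) :
    MPeval P x = evalScalarHom N x P := by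
  change P.sum (fun k A => x ^ k • A) = P.eval₂ _ _
  rw [Polynomial.eval₂_eq_sum]
  refine congrArg P.sum ?_
  funext k A
  rw [← map_pow, RingHom.id_apply, ← Algebra.commutes, Algebra.smul_def]

theorem evalScalarHom_C {N : ℕ} (x : ℝ) (A : Mat N) :
    evalScalarHom N x (Polynomial.C A) = A :=
  Polynomial.eval₂_C _ _

theorem evalScalarHom_X_mul {N : ℕ} (x : ℝ) (P : MatPoly N) :
    evalScalarHom N x (X * P) = x • evalScalarHom N x P := by
  rw [map_mul, Algebra.smul_def]
  exact congrArg (· * _) (Polynomial.eval₂_X _ _)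

theorem statement12
    (N : ℕ) (hN : 0 < N)
    (A B C : ℕ → Mat N) (V G : ℕ → MatPoly N)
    (hV : ∀ m : ℕ, X * V m = Polynomial.C (A m) * V (m + 1) + Polynomial.C (B m) * V m
      + (if m = 0 then 0 else Polynomial.C (C m) * V (m - 1)))
    (hG : ∀ m : ℕ, X * G m =
      (if m = 0 then 0 else G (m - 1) * Polynomial.C (A (m - 1)))
      + G m * Polynomial.C (B m) + G (m + 1) * Polynomial.C (C (m + 1))) :
    ∀ (m : ℕ) (x z : ℝ),
      (x - z) • ∑ k ∈ Finset.range (m + 1), MPeval (G k) z * MPeval (V k) x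
        = MPeval (G m) z * A m * MPeval (V (m + 1)) x
          - MPeval (G (m + 1)) z * C (m + 1) * MPeval (V m) x := by
  intro m x z
  simp only [MPeval_eq_evalScalarHom]
  have hv (k : ℕ) :=
    (evalScalarHom_X_mul x (V k)).symm.trans (congrArg (evalScalarHom N x) (hV k))
  have hg (k : ℕ) :=
    (evalScalarHom_X_mul z (G k)).symm.trans (congrArg (evalScalarHom N z) (hG k))
  simp only [map_add, apply_ite (evalScalarHom N _), map_mul,
    evalScalarHom_C, map_zero] at hv hg
  have key (k : ℕ) : (x - z) • (evalScalarHom N z (G k) * evalScalarHom N x (V k)) =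
      evalScalarHom N z (G k) * (x • evalScalarHom N x (V k)) -
        (z • evalScalarHom N z (G k)) * evalScalarHom N x (V k) := by
    rw [sub_smul, mul_smul_comm, smul_mul_assoc]
  induction m with
  | zero =>
    rw [Finset.sum_range_one, key, hv, hg]
    simp only [if_true]
    noncomm_ring
  | succ m ih =>
    rw [Finset.sum_range_succ, smul_add, ih, key, hv, hg]
    simp only [Nat.add_eq_zero_iff, one_ne_zero, and_false, if_false, Nat.add_sub_cancel]
    noncomm_ring
end
end

section
/- Let {A_m}, {B_m}, {C_m} be sequences of N×N real matrices and let {V_m}_{m∈ℕ} and {G_m}_{m∈ℕ} be sequences of N×N matrix polynomials satisfying, for all m ≥ 0, the recurrences x·V_m(x) = A_m·V_{m+1}(x) + B_m·V_m(x) + C_m·V_{m−1}(x) and z·G_m(z) = G_{m−1}(z)·A_{m−1} + G_m(z)·B_m + G_{m+1}(z)·C_{m+1}, with V_{−1} := 0 and G_{−1} := 0. Then for every m ∈ ℕ and every x the confluent formulas hold: (i) G_m(x)·A_m·V_{m+1}(x) − G_{m+1}(x)·C_{m+1}·V_m(x) = 0_{N×N}; (ii) Σ_{k=0}^m G_k(x)·V_k(x)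 = G_m(x)·A_m·V'_{m+1}(x) − G_{m+1}(x)·C_{m+1}·V'_m(x); and (iii) Σ_{k=0}^m G_k(x)·V_k(x) = G'_{m+1}(x)·C_{m+1}·V_m(x) − G'_m(x)·A_m·V_{m+1}(x), where ' denotes the derivative of a matrix polynomial. -/
open Polynomial Matrix Finset

noncomputable section

theorem MPeval_eq_eval₂ {N : ℕ} (P : MatPoly N) (x : ℝ) :
    MPeval P x = P.eval₂ (RingHom.id (Mat N)) (algebraMap ℝ (Mat N) x) := by
  simp only [MPeval, Polynomial.eval₂_def, RingHom.id_apply, ← map_pow]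
  congr 1
  ext1 k
  ext1 M
  rw [← Algebra.commutes, Algebra.smul_def]

theorem MPeval_zero {N : ℕ} (x : ℝ) : MPeval (0 : MatPoly N) x = 0 := by
  simp [MPeval]

theorem MPeval_add {N : ℕ} (P Q : MatPoly N) (x : ℝ) :
    MPeval (P + Q) x = MPeval P x + MPeval Q x := by
  simp only [MPeval_eq_eval₂, Polynomial.eval₂_add]

/-- Evaluation at a real point is multiplicative since scalar matrices are central. -/
theorem MPeval_mul {N : ℕ} (P Q : MatPoly N) (x : ℝ) :
    MPeval (P * Q) x = MPeval P x * MPeval Q x := by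
  simp only [MPeval_eq_eval₂]
  exact Polynomial.eval₂_mul_noncomm _ _ fun k => (Algebra.commutes x _).symm

theorem MPeval_C {N : ℕ} (M : Mat N) (x : ℝ) : MPeval (Polynomial.C M) x = M := by
  simp [MPeval_eq_eval₂]

theorem MPeval_X {N : ℕ} (x : ℝ) :
    MPeval (X : MatPoly N) x = algebraMap ℝ (Mat N) x := by
  simp [MPeval_eq_eval₂]

/-- Summation by parts for inhomogeneous left and right three-term recurrences
with a central spectral parameter `z`. -/
theorem sum_eq_of_three_term_recurrence {R : Type*} [Ring R] {z : R} (hz : ∀ r, z * r = r * z)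
    {a b c w s h t : ℕ → R}
    (hw : ∀ m, z * w m + s m = a m * w (m + 1) + b m * w m
      + (if m = 0 then 0 else c m * w (m - 1)))
    (hh : ∀ m, z * h m + t m = (if m = 0 then 0 else h (m - 1) * a (m - 1))
      + h m * b m + h (m + 1) * c (m + 1)) (m : ℕ) :
    ∑ k ∈ Finset.range (m + 1), (h k * s k - t k * w k)
      = h m * a m * w (m + 1) - h (m + 1) * c (m + 1) * w m := by
  have key (m : ℕ) : h m * s m - t m * w m =
      h m * (z * w m + s m) - (z * h m + t m) * w m := by
    rw [hz (h m)]
    noncomm_ring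
  induction m with
  | zero =>
    rw [zero_add, Finset.sum_range_one, key, hw, hh]
    simp only [if_true]
    noncomm_ring
  | succ m ih =>
    rw [Finset.sum_range_succ, ih, key, hw, hh]
    simp only [Nat.add_one_ne_zero, if_false, Nat.add_sub_cancel]
    noncomm_ring

theorem statement13
    (N : ℕ) (hN : 0 < N)
    (A B C : ℕ → Mat N) (V G : ℕ → MatPoly N)
    (hV : ∀ m : ℕ, X * V m = Polynomial.C (A m) * V (m + 1) + Polynomial.C (B m) * V m
      + (if m = 0 then 0 else Polynomial.C (C m) * V (m - 1)))
    (hG : ∀ m : ℕ, X * G m =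
      (if m = 0 then 0 else G (m - 1) * Polynomial.C (A (m - 1)))
      + G m * Polynomial.C (B m) + G (m + 1) * Polynomial.C (C (m + 1))) :
    ∀ (m : ℕ) (x : ℝ),
      -- (i) confluent formula
      (MPeval (G m) x * A m * MPeval (V (m + 1)) x
        - MPeval (G (m + 1)) x * C (m + 1) * MPeval (V m) x = 0) ∧
      -- (ii)
      (∑ k ∈ Finset.range (m + 1), MPeval (G k) x * MPeval (V k) x
        = MPeval (G m) x * A m * MPeval (Polynomial.derivative (V (m + 1))) x
          - MPeval (G (m + 1)) x * C (m + 1) * MPeval (Polynomial.derivative (V m)) x) ∧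
      -- (iii)
      (∑ k ∈ Finset.range (m + 1), MPeval (G k) x * MPeval (V k) x
        = MPeval (Polynomial.derivative (G (m + 1))) x * C (m + 1) * MPeval (V m) x
          - MPeval (Polynomial.derivative (G m)) x * A m * MPeval (V (m + 1)) x) := by
  intro m x
  have hz (r : Mat N) : algebraMap ℝ (Mat N) x * r = r * algebraMap ℝ (Mat N) x :=
    Algebra.commutes x r
  have hv (m : ℕ) := congrArg (MPeval · x) (hV m)
  have hg (m : ℕ) := congrArg (MPeval · x) (hG m)
  have hv' (m : ℕ) := congrArg (fun P => MPeval (derivative P) x) (hV m)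
  have hg' (m : ℕ) := congrArg (fun P => MPeval (derivative P) x) (hG m)
  simp only [apply_ite derivative, apply_ite (MPeval · x), derivative_add, derivative_mul,
    derivative_X, derivative_C, derivative_zero, one_mul, zero_mul, mul_zero, zero_add, add_zero,
    MPeval_add, MPeval_mul, MPeval_C, MPeval_X, MPeval_zero] at hv hg hv' hg'
  have hv₀ (m : ℕ) := (add_zero _).trans (hv m)
  have hg₀ (m : ℕ) := (add_zero _).trans (hg m)
  have hv₁ (m : ℕ) := (add_comm _ _).trans (hv' m)
  have hg₁ (m : ℕ) := (add_comm _ _).trans (hg' m)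
  have h₁ := sum_eq_of_three_term_recurrence hz
    (w := fun k => MPeval (V k) x) (s := fun _ => 0)
    (h := fun k => MPeval (G k) x) (t := fun _ => 0) hv₀ hg₀ m
  have h₂ := sum_eq_of_three_term_recurrence hz
    (w := fun k => MPeval (derivative (V k)) x) (s := fun k => MPeval (V k) x)
    (h := fun k => MPeval (G k) x) (t := fun _ => 0) hv₁ hg₀ m
  have h₃ := sum_eq_of_three_term_recurrence hz
    (w := fun k => MPeval (V k) x) (s := fun _ => 0)
    (h := fun k => MPeval (derivative (G k)) x) (t := fun k => MPeval (G k) x) hv₀ hg₁ m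
  simp only [mul_zero, zero_mul, sub_zero, zero_sub, Finset.sum_const_zero,
    Finset.sum_neg_distrib] at h₁ h₂ h₃
  refine ⟨h₁.symm, h₂, ?_⟩
  rw [← neg_sub, ← h₃, neg_neg]
end
end

section
/- Let V(t) be an N×N matrix polynomial over ℂ and let a ∈ ℂ be a zero of the scalar polynomial det V(t) of multiplicity p ≥ 1. Set L(a,V) = {v ∈ ℂ^N (row vector) : v·V(a) = 0} and R(a,V) = {v ∈ ℂ^N (row vector) : V(a)·v* = 0}, where v* is the conjugate transpose of v. If dim L(a,V) = dim R(a,V) = p, then: (i) the l-th derivative of the adjugate satisfies (Adj V)^{(l)}(a) = 0_{N×N} for all 0 ≤ l ≤ p−2; (ii) M := (Adj V)^{(p−1)}(a) ≠ 0_{N×N} and rank M = p; (iii) the linear map v ↦ v·M maps ℂ^N onto L(a,V), and its restriction to R(a,V) is an isomorphism onto L(a,V). -/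
open Polynomial Matrix

noncomputable section

/-- Iterated derivative of a polynomial. -/
def iterDeriv {R : Type*} [CommSemiring R] (l : ℕ) (q : Polynomial R) : Polynomial R :=
  (fun r => Polynomial.derivative r)^[l] q

/-- The left null space `L(a,V) = {v : v · V(a) = 0}` (row vectors). -/
def Lsub {N : ℕ} (M : Matrix (Fin N) (Fin N) ℂ) : Submodule ℂ (Fin N → ℂ) :=
  LinearMap.ker M.vecMulLinear

/-- The space `R(a,V) = {v : V(a) · v* = 0}`, where `v*` is the conjugate transpose of the
row vector `v`. -/
def Rsub {N : ℕ} (M : Matrix (Fin N) (Fin N) ℂ) : Submodule ℂ (Fin N → ℂ) where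
  carrier := {v | M.mulVec (fun i => (starRingEnd ℂ) (v i)) = 0}
  zero_mem' := by
    have : (fun i : Fin N => (starRingEnd ℂ) ((0 : Fin N → ℂ) i)) = (0 : Fin N → ℂ) := by
      funext i; simp
    simp only [Set.mem_setOf_eq, this, Matrix.mulVec_zero]
  add_mem' := by
    intro a b ha hb
    simp only [Set.mem_setOf_eq] at *
    have : (fun i => (starRingEnd ℂ) ((a + b) i))
        = (fun i => (starRingEnd ℂ) (a i)) + (fun i => (starRingEnd ℂ) (b i)) := by
      funext i; simp
    rw [this, Matrix.mulVec_add, ha, hb, add_zero]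
  smul_mem' := by
    intro c v hv
    simp only [Set.mem_setOf_eq] at *
    have : (fun i => (starRingEnd ℂ) ((c • v) i))
        = (starRingEnd ℂ) c • (fun i => (starRingEnd ℂ) (v i)) := by
      funext i; simp [mul_comm]
    rw [this, Matrix.mulVec_smul, hv, smul_zero]

/-- The matrix `(Adj V)^{(l)}(a)`: the `l`-th derivative of the adjugate, evaluated at `a`. -/
def adjDer {N : ℕ} (V : Matrix (Fin N) (Fin N) (Polynomial ℂ)) (l : ℕ) (a : ℂ) :
    Matrix (Fin N) (Fin N) ℂ :=
  Matrix.of fun i j => Polynomial.eval a (iterDeriv l (V.adjugate i j))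

/-- The `l`-th derivative at `a` of a multiple of `(X - a) ^ m` is `0` for `l < m` and
`m !` times the value of the cofactor for `l = m`. -/
theorem eval_iterDeriv_X_sub_C_pow_mul {R : Type*} [CommRing R] (a : R) (m l : ℕ) (hl : l ≤ m)
    (u : R[X]) :
    eval a (iterDeriv l ((X - C a) ^ m * u)) =
      if l = m then (m.factorial : R) * eval a u else 0 := by
  have key : iterDeriv l ((X - C a) ^ m * u)
      = l.factorial • hasseDeriv l ((X - C a) ^ m * u) := by
    rw [← LinearMap.smul_apply, factorial_smul_hasseDeriv]
    rfl
  have hcoeff : eval a (hasseDeriv l ((X - C a) ^ m * u))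
      = if m ≤ l then (taylor a u).coeff (l - m) else 0 := by
    rw [← taylor_coeff, taylor_mul, taylor_pow, map_sub, taylor_X, taylor_C, add_sub_cancel_right,
      coeff_X_pow_mul']
  rw [key, nsmul_eq_mul, eval_mul, hcoeff, eval_natCast]
  rcases hl.lt_or_eq with h | rfl
  · simp [h.not_ge, h.ne]
  · simp [taylor_coeff_zero]

/-- A subspace of `Fin N → K` of dimension `p` contains `p` of the rows of an invertible
matrix. -/
theorem exists_isUnit_det_rows_mem {K : Type*} [Field K] {N : ℕ} (L : Submodule K (Fin N → K)) :
    ∃ (B : Matrix (Fin N) (Fin N) K) (S : Finset (Fin N)), IsUnit B.det ∧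
      S.card = Module.finrank K L ∧ ∀ i ∈ S, B i ∈ L := by
  obtain ⟨L', hL'⟩ := L.exists_isCompl
  let b₀ := ((Module.finBasis K L).prod (Module.finBasis K L')).map
    (L.prodEquivOfIsCompl L' hL')
  let e := b₀.indexEquiv (Pi.basisFun K (Fin N))
  let b := b₀.reindex e
  refine ⟨Matrix.of b, (Finset.univ : Finset (Fin (Module.finrank K L))).map
    (Function.Embedding.inl.trans e.toEmbedding), ?_, by simp, ?_⟩
  · rw [← Matrix.isUnit_iff_isUnit_det, ← Matrix.linearIndependent_rows_iff_isUnit]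
    exact b.linearIndependent
  · intro i hi
    obtain ⟨k, -, rfl⟩ := Finset.mem_map.1 hi
    change b (e (Sum.inl k)) ∈ L
    simp [b, b₀]

theorem adjugate_eq_smul_of_mul_eq {R : Type*} [CommRing R] {n : Type*} [Fintype n]
    [DecidableEq n] {B B' V D W : Matrix n n R} (hB : B * B' = 1) (h : B * V = D * W) :
    V.adjugate = B'.det • (W.adjugate * D.adjugate * B) := by
  have hdet : B.det * B'.det = 1 := by rw [← det_mul, hB, det_one]
  rw [← adjugate_mul_distrib, ← h, adjugate_mul_distrib, Matrix.mul_assoc, adjugate_mul,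
    Matrix.mul_smul, Matrix.mul_one, smul_smul, mul_comm, hdet, one_smul]

theorem adjugate_diagonal_ite {R : Type*} [CommRing R] {n : Type*} [Fintype n]
    [DecidableEq n] (S : Finset n) (hS : S.Nonempty) (x : R) :
    (diagonal fun i => if i ∈ S then x else 1).adjugate
      = x ^ (S.card - 1) • diagonal fun i => if i ∈ S then 1 else x := by
  rw [adjugate_diagonal, ← diagonal_smul]
  congr 1
  funext i
  rw [Finset.prod_ite, Finset.prod_const, Finset.prod_const_one, mul_one,
    Finset.filter_mem_eq_inter, Finset.erase_inter, Finset.univ_inter, Pi.smul_apply, smul_eq_mul]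
  split_ifs with h
  · rw [Finset.card_erase_of_mem h, mul_one]
  · rw [Finset.erase_eq_of_notMem h, ← pow_succ, Nat.sub_add_cancel hS.card_pos]

/-- If the order `p` of the zero `a` of `det V` equals the dimension of the left null space of
`V(a)`, then `Adj V` is `(X - a) ^ (p - 1)` times a matrix polynomial whose value at `a` has
rank `p`. -/
theorem exists_adjugate_eq_X_sub_C_pow_smul {N : ℕ} (V : Matrix (Fin N) (Fin N) ℂ[X]) (a : ℂ)
    (p : ℕ) (hp : 1 ≤ p) (hdet : V.det ≠ 0) (hmult : V.det.rootMultiplicity a = p)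
    (hdimL : Module.finrank ℂ (Lsub (V.map (eval a))) = p) :
    ∃ U : Matrix (Fin N) (Fin N) ℂ[X], V.adjugate = (X - C a) ^ (p - 1) • U ∧
      (U.map (eval a)).rank = p := by
  obtain ⟨B, S, hB, hS, hmem⟩ := exists_isUnit_det_rows_mem (Lsub (V.map (eval a)))
  rw [hdimL] at hS
  have hSne : S.Nonempty := Finset.card_pos.1 (by omega)
  have hdvd : ∀ i j, ∃ w, (B.map C * V) i j = (if i ∈ S then X - C a else 1) * w := by
    intro i j
    split_ifs with hi
    · apply dvd_iff_isRoot.2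
      have h0 : B i ᵥ* V.map (eval a) = 0 := hmem i hi
      have := congrFun h0 j
      simpa [IsRoot, Matrix.mul_apply, vecMul, dotProduct, eval_finsetSum] using this
    · exact ⟨_, (one_mul _).symm⟩
  choose W hW using hdvd
  set D : Matrix (Fin N) (Fin N) ℂ[X] := diagonal fun i => if i ∈ S then X - C a else 1 with hD
  have hBV : B.map C * V = D * Matrix.of W := by
    ext1 i j
    rw [hW, hD, diagonal_mul, Matrix.of_apply]
  have hmapdet : (B.map C).det = C B.det := (RingHom.map_det C B).symm
  have hinv : B.map C * B⁻¹.map C = 1 := by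
    rw [← Matrix.map_mul, Matrix.mul_nonsing_inv _ hB]
    simp
  have hWdet : eval a (Matrix.of W).det ≠ 0 := by
    obtain ⟨q, hq, hndvd⟩ := exists_eq_pow_rootMultiplicity_mul_and_not_dvd V.det hdet a
    rw [hmult] at hq
    have hprod := congrArg Matrix.det hBV
    rw [det_mul, det_mul, hmapdet, hD, det_diagonal, Finset.prod_ite, Finset.prod_const,
      Finset.prod_const_one, mul_one, Finset.filter_mem_eq_inter, Finset.univ_inter, hS, hq,
      mul_left_comm] at hprod
    rw [← mul_left_cancel₀ (pow_ne_zero p (X_sub_C_ne_zero a)) hprod, eval_mul, eval_C]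
    exact mul_ne_zero hB.ne_zero fun h => hndvd (dvd_iff_isRoot.2 h)
  refine ⟨(B⁻¹.map C).det • ((Matrix.of W).adjugate *
    (diagonal fun i => if i ∈ S then 1 else X - C a) * B.map C), ?_, ?_⟩
  · rw [adjugate_eq_smul_of_mul_eq hinv hBV, hD, adjugate_diagonal_ite S hSne, hS,
      Matrix.mul_smul, Matrix.smul_mul, smul_comm]
  · have hval : ((B⁻¹.map C).det • ((Matrix.of W).adjugate *
        (diagonal fun i => if i ∈ S then 1 else X - C a) * B.map C)).map (eval a)
        = (B⁻¹.det • ((Matrix.of W).map (eval a)).adjugate) *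
          ((diagonal fun i => if i ∈ S then 1 else 0) * B) := by
      have hadj : (Matrix.of W).adjugate.map (eval a) = ((Matrix.of W).map (eval a)).adjugate :=
        RingHom.map_adjugate (evalRingHom a) _
      rw [← hadj, ← Matrix.mul_assoc, Matrix.smul_mul, Matrix.smul_mul]
      have hdet' : (B⁻¹.map C).det = C B⁻¹.det := (RingHom.map_det C B⁻¹).symm
      ext i j
      simp [hdet', Matrix.mul_apply, diagonal_apply, eval_finsetSum, apply_ite (eval a)]
    have hWa : ((Matrix.of W).map (eval a)).det = eval a (Matrix.of W).det :=
      (RingHom.map_det (evalRingHom a) _).symm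
    rw [hval, rank_mul_eq_right_of_isUnit_det, rank_mul_eq_left_of_isUnit_det _ _ hB,
      rank_diagonal]
    · simp [hS]
    · rw [det_smul, det_adjugate, hWa, isUnit_iff_ne_zero]
      refine mul_ne_zero (pow_ne_zero _ ?_) (pow_ne_zero _ hWdet)
      exact (Matrix.isUnit_nonsing_inv_det B hB).ne_zero

theorem finrank_range_vecMulLinear {N : ℕ} (M : Matrix (Fin N) (Fin N) ℂ) :
    Module.finrank ℂ (LinearMap.range M.vecMulLinear) = M.rank := by
  rw [← rank_transpose, rank, mulVecLin_transpose]

open scoped ComplexOrder in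
/-- A row vector in the row space of `A` that also lies in `Rsub A` is zero. -/
theorem eq_zero_of_mem_Rsub_of_mem_range {N : ℕ} {A : Matrix (Fin N) (Fin N) ℂ} {v : Fin N → ℂ}
    (hv : v ∈ Rsub A) (hr : v ∈ LinearMap.range A.vecMulLinear) : v = 0 := by
  obtain ⟨w, hw⟩ := hr
  have hv' : A *ᵥ star v = 0 := hv
  rw [vecMulLinear_apply] at hw
  rw [← dotProduct_self_star_eq_zero]
  nth_rewrite 1 [← hw]
  rw [← dotProduct_mulVec, hv', dotProduct_zero]

/-- If `A * M = 0` and `M * A = 0` with `rank M` equal to the nullity of `A`, then `v ↦ v M` maps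
onto the left null space of `A`, and its kernel is the row space of `A`. -/
theorem range_and_ker_vecMulLinear {N : ℕ} {A M : Matrix (Fin N) (Fin N) ℂ} (hAM : A * M = 0)
    (hMA : M * A = 0) (hrank : M.rank = Module.finrank ℂ (Lsub A)) :
    LinearMap.range M.vecMulLinear = Lsub A ∧
      LinearMap.ker M.vecMulLinear = LinearMap.range A.vecMulLinear := by
  constructor
  · apply Submodule.eq_of_le_of_finrank_eq
    · rintro _ ⟨v, rfl⟩
      simp [Lsub, hMA]
    · rw [finrank_range_vecMulLinear, hrank]
  · symm
    apply Submodule.eq_of_le_of_finrank_eq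
    · rintro _ ⟨v, rfl⟩
      simp [hAM]
    · have h₁ := A.vecMulLinear.finrank_range_add_finrank_ker
      have h₂ := M.vecMulLinear.finrank_range_add_finrank_ker
      rw [finrank_range_vecMulLinear M, hrank, Lsub] at h₂
      omega

theorem statement16
    (N : ℕ) (hN : 0 < N)
    (V : Matrix (Fin N) (Fin N) (Polynomial ℂ)) (a : ℂ) (p : ℕ) (hp : 1 ≤ p)
    (hdet : V.det ≠ 0) (hmult : (V.det).rootMultiplicity a = p)
    (hdimL : Module.finrank ℂ (Lsub (V.map (Polynomial.eval a))) = p)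
    (hdimR : Module.finrank ℂ (Rsub (V.map (Polynomial.eval a))) = p) :
    -- (i)
    (∀ l : ℕ, l + 1 < p → adjDer V l a = 0) ∧
    -- (ii)
    adjDer V (p - 1) a ≠ 0 ∧ (adjDer V (p - 1) a).rank = p ∧
    -- (iii): v ↦ v · M maps ℂ^N onto L(a,V) and restricts to an isomorphism of
    -- R(a,V) onto L(a,V)
    (Set.range fun v : Fin N → ℂ => Matrix.vecMul v (adjDer V (p - 1) a))
      = (Lsub (V.map (Polynomial.eval a)) : Set (Fin N → ℂ)) ∧
    Set.InjOn (fun v : Fin N → ℂ => Matrix.vecMul v (adjDer V (p - 1) a))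
      (Rsub (V.map (Polynomial.eval a))) ∧
    (fun v : Fin N → ℂ => Matrix.vecMul v (adjDer V (p - 1) a)) ''
        (Rsub (V.map (Polynomial.eval a)))
      = (Lsub (V.map (Polynomial.eval a)) : Set (Fin N → ℂ)) := by
  obtain ⟨U, hU, hrankU⟩ := exists_adjugate_eq_X_sub_C_pow_smul V a p hp hdet hmult hdimL
  set A := V.map (eval a)
  have hder : ∀ l, l ≤ p - 1 → adjDer V l a
      = if l = p - 1 then ((p - 1).factorial : ℂ) • U.map (eval a) else 0 := by
    intro l hl
    ext i j
    rw [adjDer, Matrix.of_apply, hU, Matrix.smul_apply, smul_eq_mul,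
      eval_iterDeriv_X_sub_C_pow_mul a _ _ hl]
    split_ifs <;> simp
  have hM := hder (p - 1) le_rfl
  rw [if_pos rfl] at hM
  have hfac : ((p - 1).factorial : ℂ) ≠ 0 := Nat.cast_ne_zero.2 (Nat.factorial_ne_zero _)
  obtain ⟨q, hq⟩ := pow_rootMultiplicity_dvd V.det a
  have hpow : (X - C a) ^ p = (X - C a) ^ (p - 1) * (X - C a) := by
    rw [← pow_succ, Nat.sub_add_cancel hp]
  rw [hmult, hpow, mul_assoc] at hq
  have hne : (X - C a) ^ (p - 1) ≠ 0 := pow_ne_zero _ (X_sub_C_ne_zero a)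
  have hvanish : (((X - C a) * q) • (1 : Matrix (Fin N) (Fin N) ℂ[X])).map (eval a) = 0 := by
    ext i j
    simp
  have hVU : V * U = ((X - C a) * q) • 1 := by
    have h := V.mul_adjugate
    rw [hU, Matrix.mul_smul, hq, ← smul_smul] at h
    exact smul_right_injective _ hne h
  have hUV : U * V = ((X - C a) * q) • 1 := by
    have h := V.adjugate_mul
    rw [hU, Matrix.smul_mul, hq, ← smul_smul] at h
    exact smul_right_injective _ hne h
  have hAU : A * U.map (eval a) = 0 := by
    rw [← hvanish, ← hVU]
    exact (Matrix.map_mul (f := evalRingHom a)).symm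
  have hUA : U.map (eval a) * A = 0 := by
    rw [← hvanish, ← hUV]
    exact (Matrix.map_mul (f := evalRingHom a)).symm
  generalize adjDer V (p - 1) a = M at hM ⊢
  have hrank : M.rank = p := by
    rw [hM, rank_smul_of_mem_nonZeroDivisors _ (mem_nonZeroDivisors_of_ne_zero hfac), hrankU]
  obtain ⟨hrange, hker⟩ := range_and_ker_vecMulLinear (A := A) (M := M)
    (by rw [hM, Matrix.mul_smul, hAU, smul_zero]) (by rw [hM, Matrix.smul_mul, hUA, smul_zero])
    (hrank.trans hdimL.symm)
  have hinj : Set.InjOn M.vecMulLinear (Rsub A) := by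
    intro v hv w hw hvw
    refine sub_eq_zero.1 (eq_zero_of_mem_Rsub_of_mem_range (sub_mem hv hw) (A := A) ?_)
    rw [← hker, LinearMap.mem_ker, map_sub, hvw, sub_self]
  have himage : (Rsub A).map M.vecMulLinear = Lsub A := by
    apply Submodule.eq_of_le_of_finrank_eq
    · rw [← hrange]
      exact LinearMap.map_le_range
    · rw [hdimL, ← hdimR]
      rw [← LinearMap.range_domRestrict]
      exact LinearMap.finrank_range_of_inj (Set.injOn_iff_injective.1 hinj)
  refine ⟨fun l hl => ?_, ?_, hrank, ?_, hinj, ?_⟩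
  · rw [hder l (by omega), if_neg (by omega)]
  · rintro rfl
    rw [rank_zero] at hrank
    omega
  · exact congrArg SetLike.coe hrange
  · exact congrArg SetLike.coe himage
end
end

section
/- Let V_m be an N×N matrix polynomial over ℂ of degree m with nonsingular leading coefficient, let x_{m,1}, …, x_{m,s} be the distinct zeros of det V_m, with multiplicities l_1, …, l_s, and assume that for each k the left and right null spaces of V_m(x_{m,k}) both have dimension l_k (so l_k ≤ N). Then for every N×N matrix polynomial V of degree ≤ m−1 and every t ∈ ℂ \ {x_{m,1},…,x_{m,s}} the partial fraction decomposition V(t)·(V_m(t))^{−1} = Σ_{k=1}^s C_{m,k}/(t − x_{m,k}) holds, where C_{m,k} = (l_k / (det V_m)^{(l_k)}(x_{m,k})) · V(x_{m,k}) · (Adj V_m)^{(l_k−1)}(x_{m,k}). -/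
open Polynomial Matrix

noncomputable section

/-- Evaluation of a matrix of polynomials at a point. -/
def evalMat {N : ℕ} (V : Matrix (Fin N) (Fin N) (Polynomial ℂ)) (t : ℂ) :
    Matrix (Fin N) (Fin N) ℂ :=
  V.map (Polynomial.eval t)

theorem eval_iterDeriv_X_sub_C_pow_mul_s17 {R : Type*} [CommRing R] (a : R) (n : ℕ)
    (g : Polynomial R) :
    (iterDeriv n ((X - C a) ^ n * g)).eval a = (n.factorial : R) * g.eval a := by
  have hder : iterDeriv n ((X - C a) ^ n * g)
      = n.factorial • hasseDeriv n ((X - C a) ^ n * g) :=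
    (congrFun (factorial_smul_hasseDeriv (R := R) n) _).symm
  have hcoeff : (taylor a ((X - C a) ^ n * g)).coeff n = g.eval a := by
    rw [taylor_mul, taylor_pow, map_sub, taylor_X, taylor_C, add_sub_cancel_right,
      coeff_X_pow_mul', if_pos le_rfl, Nat.sub_self, taylor_coeff_zero]
  rw [hder, eval_smul, ← taylor_coeff, hcoeff, nsmul_eq_mul]

theorem evalMat_mul {N : ℕ} (A B : Matrix (Fin N) (Fin N) ℂ[X]) (t : ℂ) :
    evalMat (A * B) t = evalMat A t * evalMat B t :=
  Matrix.map_mul (f := evalRingHom t)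

theorem det_evalMat {N : ℕ} (A : Matrix (Fin N) (Fin N) ℂ[X]) (t : ℂ) :
    (evalMat A t).det = A.det.eval t :=
  ((evalRingHom t).map_det A).symm

theorem adjugate_evalMat {N : ℕ} (A : Matrix (Fin N) (Fin N) ℂ[X]) (t : ℂ) :
    (evalMat A t).adjugate = evalMat A.adjugate t :=
  ((evalRingHom t).map_adjugate A).symm

/-- A zero of a matrix polynomial with `r`-dimensional kernel is a zero of the determinant of
multiplicity at least `r`. -/
theorem X_sub_C_pow_finrank_ker_dvd_det {N : ℕ} (W : Matrix (Fin N) (Fin N) ℂ[X]) (a : ℂ) :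
    (X - C a) ^ Module.finrank ℂ (LinearMap.ker (evalMat W a).mulVecLin) ∣ W.det := by
  set K := LinearMap.ker (evalMat W a).mulVecLin
  obtain ⟨L, hL⟩ := K.exists_isCompl
  let b := ((Module.finBasis ℂ K).prod (Module.finBasis ℂ L)).map
    (K.prodEquivOfIsCompl L hL)
  let e := b.indexEquiv (Pi.basisFun ℂ (Fin N))
  let P : Matrix (Fin N) (Fin N) ℂ := (Pi.basisFun ℂ (Fin N)).toMatrix (b.reindex e)
  have hP : IsUnit P.det :=
    (Matrix.isUnit_iff_isUnit_det P).1
      (@isUnit_of_invertible _ _ P ((Pi.basisFun ℂ (Fin N)).invertibleToMatrix (b.reindex e)))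
  let d : Fin N → ℂ[X] := fun j => Sum.elim (fun _ => X - C a) (fun _ => 1) (e.symm j)
  have hd : ∏ j, d j = (X - C a) ^ Module.finrank ℂ K := by
    rw [← e.prod_comp]
    simp [d, Fintype.prod_sum_type]
  have hdvd : ∀ i j, d j ∣ (W * P.map C) i j := by
    intro i j
    obtain ⟨q, rfl⟩ := e.surjective j
    rcases q with q | q
    · have hmem : (evalMat W a) *ᵥ (Module.finBasis ℂ K q : Fin N → ℂ) = 0 :=
        (Module.finBasis ℂ K q).2
      have hcol : ∀ u, P u (e (Sum.inl q)) = (Module.finBasis ℂ K q : Fin N → ℂ) u := by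
        intro u
        simp [P, Module.Basis.toMatrix_apply, b]
      simp only [d, Equiv.symm_apply_apply, Sum.elim_inl]
      rw [dvd_iff_isRoot, IsRoot.def, Matrix.mul_apply, eval_finsetSum]
      simpa [Matrix.mulVec, dotProduct, evalMat, hcol] using congrFun hmem i
    · simp [d]
  choose M hM using hdvd
  have hfac : W * P.map C = Matrix.of M * Matrix.diagonal d := by
    ext1 i j
    rw [hM, Matrix.mul_diagonal, Matrix.of_apply, mul_comm]
  have hdet : W.det * C P.det =
      (Matrix.of M).det * (X - C a) ^ Module.finrank ℂ K := by
    rw [RingHom.map_det, ← hd, ← Matrix.det_diagonal, ← Matrix.det_mul, ← Matrix.det_mul, ← hfac,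
      RingHom.mapMatrix_apply]
  exact (isUnit_C.2 hP).dvd_mul_right.1 (hdet ▸ Dvd.intro_left _ rfl)

theorem X_sub_C_pow_dvd_adjugate {N : ℕ} (W : Matrix (Fin N) (Fin N) ℂ[X]) (a : ℂ)
    (i j : Fin N) :
    (X - C a) ^ (Module.finrank ℂ (LinearMap.ker (evalMat W a).mulVecLin) - 1)
      ∣ W.adjugate i j := by
  rw [Matrix.adjugate_apply]
  refine (pow_dvd_pow _ ?_).trans (X_sub_C_pow_finrank_ker_dvd_det _ a)
  set K := LinearMap.ker (evalMat W a).mulVecLin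
  set L := LinearMap.ker (evalMat (W.updateRow j (Pi.single i 1)) a).mulVecLin
  let f : K →ₗ[ℂ] ℂ := (LinearMap.proj i).comp K.subtype
  have hle : (LinearMap.ker f).map K.subtype ≤ L := by
    rintro _ ⟨⟨w, hw⟩, hwi, rfl⟩
    replace hwi : w i = 0 := hwi
    replace hw : evalMat W a *ᵥ w = 0 := hw
    change evalMat (W.updateRow j (Pi.single i 1)) a *ᵥ w = 0
    funext u
    by_cases hu : u = j
    · subst hu
      simp only [Matrix.mulVec, dotProduct, evalMat, Matrix.map_apply, Matrix.updateRow_self,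
        Pi.zero_apply]
      refine Finset.sum_eq_zero fun q _ => ?_
      by_cases hq : q = i
      · simp [hq, hwi]
      · simp [hq]
    · simpa [Matrix.mulVec, dotProduct, evalMat, Matrix.updateRow_ne hu] using congrFun hw u
  have hrank := f.finrank_range_add_finrank_ker
  have hrange : Module.finrank ℂ (LinearMap.range f) ≤ 1 := by
    simpa using (LinearMap.range f).finrank_le
  have hker := Submodule.finrank_mono hle
  rw [Submodule.finrank_map_subtype_eq] at hker
  omega

theorem natDegree_det_le_sum {R n : Type*} [CommRing R] [Fintype n] [DecidableEq n]
    (A : Matrix n n R[X]) (d : n → ℕ) (hA : ∀ i j, (A i j).natDegree ≤ d i) :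
    A.det.natDegree ≤ ∑ i, d i := by
  rw [Matrix.det_apply]
  refine natDegree_sum_le_of_forall_le _ _ fun σ _ => ?_
  refine (natDegree_smul_le _ _).trans ((natDegree_prod_le _ _).trans ?_)
  rw [← Equiv.sum_comp σ d]
  exact Finset.sum_le_sum fun i _ => hA _ _

theorem natDegree_adjugate_le {R : Type*} [CommRing R] {N m : ℕ}
    (A : Matrix (Fin N) (Fin N) R[X]) (hA : ∀ i j, (A i j).natDegree ≤ m) (i j : Fin N) :
    (A.adjugate i j).natDegree ≤ (N - 1) * m := by
  rw [Matrix.adjugate_apply]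
  refine (natDegree_det_le_sum _ (fun u => if u = j then 0 else m) fun u q => ?_).trans ?_
  · by_cases hu : u = j
    · subst hu
      by_cases hq : q = i
      · simp [hq]
      · simp [hq]
    · simpa [hu] using hA u q
  · simp [Finset.sum_ite, Finset.filter_ne']

theorem coeff_det_card_mul {R n : Type*} [CommRing R] [Fintype n] [DecidableEq n]
    (A : Matrix n n R[X]) (m : ℕ) (hA : ∀ i j, (A i j).natDegree ≤ m) :
    A.det.coeff (Fintype.card n * m) = (Matrix.of fun i j => (A i j).coeff m).det := by
  rw [Matrix.det_apply, Matrix.det_apply, finsetSum_coeff]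
  refine Finset.sum_congr rfl fun σ _ => ?_
  rw [coeff_smul]
  congr 1
  exact coeff_prod_of_natDegree_le _ _ _ fun i _ => hA _ _

theorem eq_C_mul_prod_X_sub_C_pow {D : ℂ[X]} (hD : D ≠ 0) {s : ℕ} {x : Fin s → ℂ}
    (hinj : Function.Injective x) (hzeros : ∀ z, D.eval z = 0 ↔ ∃ k, z = x k) :
    D = C D.leadingCoeff * ∏ k, (X - C (x k)) ^ D.rootMultiplicity (x k) := by
  classical
  have hroots : D.roots.toFinset = Finset.univ.image x := by
    ext z
    simp [hD, hzeros, eq_comm]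
  conv_lhs => rw [(IsAlgClosed.splits D).eq_prod_roots, Finset.prod_multiset_map_count, hroots,
    Finset.prod_image hinj.injOn]
  simp only [count_roots]

/-- Partial fractions of `p / D` when every pole is simple, with the residues written through
derivatives of `p` and of `D`. -/
theorem eval_div_eval_eq_sum {s : ℕ} {x : Fin s → ℂ} (hinj : Function.Injective x)
    {l : Fin s → ℕ} (hl : ∀ k, 1 ≤ l k) {c : ℂ} (hc : c ≠ 0) {D p : ℂ[X]}
    (hD : D = C c * ∏ k, (X - C (x k)) ^ l k)
    (hp : ∀ k, (X - C (x k)) ^ (l k - 1) ∣ p) (hdeg : p.degree < D.degree)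
    {t : ℂ} (ht : ∀ k, t ≠ x k) :
    p.eval t / D.eval t = ∑ k, (t - x k)⁻¹ *
      ((l k : ℂ) / (iterDeriv (l k) D).eval (x k) * (iterDeriv (l k - 1) p).eval (x k)) := by
  set Q : ℂ[X] := ∏ k, (X - C (x k)) ^ (l k - 1) with hQ
  set n : ℂ[X] := Lagrange.nodal Finset.univ x with hn
  have hDQ : D = C c * (Q * n) := by
    rw [hD, hQ, hn, Lagrange.nodal, ← Finset.prod_mul_distrib]
    congr 1
    refine Finset.prod_congr rfl fun k _ => ?_
    rw [← pow_succ, Nat.sub_add_cancel (hl k)]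
  obtain ⟨g, rfl⟩ : Q ∣ p := by
    refine Finset.prod_dvd_of_coprime (fun i _ j _ hij => ?_) fun k _ => hp k
    exact (pairwise_coprime_X_sub_C hinj hij).pow
  have hg : g.degree < (Finset.univ : Finset (Fin s)).card := by
    have hn' : n.degree = ((Finset.univ : Finset (Fin s)).card : WithBot ℕ) :=
      Lagrange.degree_nodal
    rw [hDQ, degree_C_mul hc, degree_mul, degree_mul, hn'] at hdeg
    exact lt_of_add_lt_add_left hdeg
  have hgt : g.eval t = n.eval t * ∑ k, Lagrange.nodalWeight Finset.univ x k * (t - x k)⁻¹ *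
      g.eval (x k) := by
    conv_lhs => rw [Lagrange.eq_interpolate_of_eval_eq (fun k => g.eval (x k)) hinj.injOn hg
      fun _ _ => rfl]
    exact Lagrange.eval_interpolate_not_at_node _ fun k _ => ht k
  have hQt : Q.eval t ≠ 0 := by
    rw [hQ, eval_prod]
    refine Finset.prod_ne_zero_iff.2 fun k _ => ?_
    simpa using fun h => absurd h (sub_ne_zero.2 (ht k))
  have hnt : n.eval t ≠ 0 := by
    rw [hn, Lagrange.eval_nodal]
    exact Finset.prod_ne_zero_iff.2 fun k _ => sub_ne_zero.2 (ht k)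
  have hlhs : (Q * g).eval t / D.eval t = c⁻¹ * ∑ k,
      Lagrange.nodalWeight Finset.univ x k * (t - x k)⁻¹ * g.eval (x k) := by
    rw [hDQ, eval_mul, eval_mul, eval_mul, eval_C, hgt]
    field_simp
  rw [hlhs, Finset.mul_sum]
  refine Finset.sum_congr rfl fun k _ => ?_
  set q : ℂ[X] := ∏ j ∈ Finset.univ.erase k, (X - C (x j)) ^ (l j - 1) with hq
  set ν : ℂ[X] := ∏ j ∈ Finset.univ.erase k, (X - C (x j)) with hν
  have hQk : Q = (X - C (x k)) ^ (l k - 1) * q :=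
    (Finset.mul_prod_erase _ _ (Finset.mem_univ k)).symm
  have hnk : n = (X - C (x k)) * ν :=
    (Finset.mul_prod_erase _ (fun j => X - C (x j)) (Finset.mem_univ k)).symm
  have hDk : D = (X - C (x k)) ^ l k * (C c * (q * ν)) := by
    rw [hDQ, hQk, hnk]
    nth_rewrite 2 [← Nat.sub_add_cancel (hl k)]
    ring
  have hsub : ∀ j ∈ Finset.univ.erase k, x k - x j ≠ 0 := fun j hj =>
    sub_ne_zero.2 fun h => Finset.ne_of_mem_erase hj (hinj h).symm
  have hqk : q.eval (x k) ≠ 0 := by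
    rw [hq, eval_prod]
    refine Finset.prod_ne_zero_iff.2 fun j hj => ?_
    rw [eval_pow, eval_sub, eval_X, eval_C]
    exact pow_ne_zero _ (hsub j hj)
  have hνk : ν.eval (x k) ≠ 0 := by
    rw [hν, eval_prod]
    refine Finset.prod_ne_zero_iff.2 fun j hj => ?_
    simpa using hsub j hj
  have hw : Lagrange.nodalWeight Finset.univ x k = (ν.eval (x k))⁻¹ := by
    rw [Lagrange.nodalWeight, hν, eval_prod, ← Finset.prod_inv_distrib]
    simp
  have hfact : ((l k).factorial : ℂ) = l k * ((l k - 1).factorial : ℂ) := by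
    exact_mod_cast (Nat.mul_factorial_pred (Nat.one_le_iff_ne_zero.1 (hl k))).symm
  have hl0 : (l k : ℂ) ≠ 0 := Nat.cast_ne_zero.2 (Nat.one_le_iff_ne_zero.1 (hl k))
  have hf0 : ((l k - 1).factorial : ℂ) ≠ 0 := Nat.cast_ne_zero.2 (Nat.factorial_ne_zero _)
  have htk : t - x k ≠ 0 := sub_ne_zero.2 (ht k)
  rw [hDk, hQk, mul_assoc ((X - C (x k)) ^ (l k - 1)), eval_iterDeriv_X_sub_C_pow_mul_s17,
    eval_iterDeriv_X_sub_C_pow_mul_s17, hw, hfact]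
  simp only [eval_mul, eval_C]
  field_simp

theorem eval_iterDeriv_mul_of_dvd {R : Type*} [CommRing R] {a : R} {n : ℕ} (f : R[X]) {g : R[X]}
    (hg : (X - C a) ^ n ∣ g) :
    (iterDeriv n (f * g)).eval a = f.eval a * (iterDeriv n g).eval a := by
  obtain ⟨h, rfl⟩ := hg
  rw [mul_left_comm, eval_iterDeriv_X_sub_C_pow_mul_s17, eval_iterDeriv_X_sub_C_pow_mul_s17, eval_mul]
  ring

theorem iterDeriv_sum {R ι : Type*} [CommRing R] (n : ℕ) (S : Finset ι) (f : ι → R[X]) :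
    iterDeriv n (∑ i ∈ S, f i) = ∑ i ∈ S, iterDeriv n (f i) :=
  iterate_derivative_sum n S f

theorem statement17
    (N : ℕ) (hN : 0 < N) (m : ℕ) (hm : 1 ≤ m)
    (Vm : Matrix (Fin N) (Fin N) (Polynomial ℂ))
    (hdeg : ∀ i j, (Vm i j).natDegree ≤ m)
    (hlead : IsUnit (Matrix.of fun i j : Fin N => (Vm i j).coeff m).det)
    -- the distinct zeros of det V_m, with multiplicities l k
    (s : ℕ) (x : Fin s → ℂ) (hinj : Function.Injective x) (l : Fin s → ℕ)
    (hzeros : ∀ z : ℂ, (Vm.det).eval z = 0 ↔ ∃ k, z = x k)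
    (hmult : ∀ k, (Vm.det).rootMultiplicity (x k) = l k)
    -- the left and right null spaces of V_m(x k) both have dimension l k
    (hdimL : ∀ k, Module.finrank ℂ (LinearMap.ker (evalMat Vm (x k)).vecMulLinear) = l k)
    (hdimR : ∀ k, Module.finrank ℂ (LinearMap.ker (evalMat Vm (x k)).mulVecLin) = l k) :
    ∀ V : Matrix (Fin N) (Fin N) (Polynomial ℂ), (∀ i j, (V i j).natDegree ≤ m - 1) →
      ∀ t : ℂ, (∀ k, t ≠ x k) →
        evalMat V t * (evalMat Vm t)⁻¹
          = ∑ k : Fin s, (t - x k)⁻¹ •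
              (((l k : ℂ) / Polynomial.eval (x k) (iterDeriv (l k) Vm.det)) •
                (evalMat V (x k) * adjDer Vm (l k - 1) (x k))) := by
  intro V hV t ht
  have hcoeff : Vm.det.coeff (N * m) ≠ 0 := by
    have h := coeff_det_card_mul Vm m hdeg
    rw [Fintype.card_fin] at h
    exact h ▸ hlead.ne_zero
  have hD0 : Vm.det ≠ 0 := fun h => hcoeff (by rw [h, coeff_zero])
  have hl : ∀ k, 1 ≤ l k := fun k => by
    rw [← hmult k]
    exact (rootMultiplicity_pos hD0).2 ((hzeros _).2 ⟨k, rfl⟩)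
  have hfac := eq_C_mul_prod_X_sub_C_pow hD0 hinj hzeros
  simp only [hmult] at hfac
  have hadj : ∀ k i j, (X - C (x k)) ^ (l k - 1) ∣ Vm.adjugate i j := fun k i j => by
    rw [← hdimR k]
    exact X_sub_C_pow_dvd_adjugate Vm (x k) i j
  have hinv : (evalMat Vm t)⁻¹ = (Vm.det.eval t)⁻¹ • evalMat Vm.adjugate t := by
    rw [Matrix.inv_def, det_evalMat, adjugate_evalMat, Ring.inverse_eq_inv']
  rw [hinv, Matrix.mul_smul, ← evalMat_mul]
  ext i j
  have hdvd : ∀ k, (X - C (x k)) ^ (l k - 1) ∣ (V * Vm.adjugate) i j := fun k => by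
    rw [Matrix.mul_apply]
    exact Finset.dvd_sum fun u _ => (hadj k u j).mul_left _
  have hlt : ((V * Vm.adjugate) i j).degree < Vm.det.degree := by
    have hle : ((V * Vm.adjugate) i j).natDegree ≤ (m - 1) + (N - 1) * m := by
      rw [Matrix.mul_apply]
      exact natDegree_sum_le_of_forall_le _ _ fun u _ =>
        natDegree_mul_le_of_le (hV i u) (natDegree_adjugate_le Vm hdeg u j)
    have hNm : (m - 1) + (N - 1) * m < N * m := by
      obtain ⟨n, rfl⟩ := Nat.exists_eq_add_of_le' hN
      rw [Nat.add_sub_cancel, Nat.add_mul]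
      omega
    exact degree_lt_degree ((hle.trans_lt hNm).trans_le (le_natDegree_of_ne_zero hcoeff))
  have hmain := eval_div_eval_eq_sum hinj hl (leadingCoeff_ne_zero.2 hD0) hfac hdvd hlt ht
  rw [Matrix.smul_apply, smul_eq_mul, inv_mul_eq_div, Matrix.sum_apply]
  refine hmain.trans (Finset.sum_congr rfl fun k _ => ?_)
  rw [Matrix.smul_apply, Matrix.smul_apply, smul_eq_mul, smul_eq_mul, Matrix.mul_apply,
    Matrix.mul_apply, iterDeriv_sum, eval_finsetSum]
  congr 2
  exact Finset.sum_congr rfl fun u _ => eval_iterDeriv_mul_of_dvd _ (hadj k u j)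
end
end
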